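/- arXiv:1109.4009 — 3 statements merged into one kernel-verified Lean document; each statement's English description precedes it below -/
import Mathlib

section
/- Let N ≥ 2. Let a : [0,1] → ℝ be continuously differentiable, nondecreasing, nonconstant, with a(0) > 0. Let f : [0,∞) → ℝ be continuously differentiable and nondecreasing with f(0) = 0, f'(0) = 0, and liminf_{s→+∞} f(s)/s > 1/a(0). Then there exists a function u : [0,1] → ℝ that is continuously differentiable on [0,1], twice differentiable on (0,1), satisfies u'(0) = u'(1) = 0, u(r) > 0 for all r ∈ [0,1], u is nondecreasing on [0,1], u is nonconstant, and −u''(r) − ((N−1)/r)·u'(r) + u(r) = a(r)·f(u(r)) for all r ∈ (0,1). -/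
open Set Filter

/-- The weighted average `∫₀¹ tⁿ g(r t) dt`. For a radial right-hand side `g` in dimension `n + 1`,
the function `u` with `u'(r) = r * radialMean n g r` solves `u'' + (n / r) u' = g`. -/
noncomputable def radialMean (n : ℕ) (g : ℝ → ℝ) (r : ℝ) : ℝ :=
  ∫ t in (0:ℝ)..1, t ^ n * g (r * t)

theorem continuous_radialMean (n : ℕ) {g : ℝ → ℝ} (hg : Continuous g) :
    Continuous (radialMean n g) := by
  unfold radialMean
  apply intervalIntegral.continuous_parametric_intervalIntegral_of_continuous'
  fun_prop

theorem intervalIntegrable_radialMean (n : ℕ) {g : ℝ → ℝ} (hg : Continuous g) (r : ℝ) :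
    IntervalIntegrable (fun t => t ^ n * g (r * t)) MeasureTheory.volume 0 1 :=
  Continuous.intervalIntegrable (by fun_prop) _ _

theorem abs_radialMean_sub_le (n : ℕ) {g h : ℝ → ℝ} (hg : Continuous g) (hh : Continuous h)
    {r C : ℝ} (hC : ∀ t ∈ Icc (0:ℝ) 1, |g (r * t) - h (r * t)| ≤ C) :
    |radialMean n g r - radialMean n h r| ≤ C := by
  unfold radialMean
  rw [← intervalIntegral.integral_sub (intervalIntegrable_radialMean n hg r)
    (intervalIntegrable_radialMean n hh r), ← Real.norm_eq_abs]
  refine (intervalIntegral.norm_integral_le_of_norm_le_const (C := C) ?_).trans (by simp)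
  intro t ht
  rw [uIoc_of_le zero_le_one] at ht
  have h1 := hC t ⟨ht.1.le, ht.2⟩
  have h2 : t ^ n ≤ 1 := pow_le_one₀ ht.1.le ht.2
  have h3 : 0 ≤ t ^ n := pow_nonneg ht.1.le n
  rw [← mul_sub, norm_mul, Real.norm_of_nonneg h3, Real.norm_eq_abs]
  nlinarith [abs_nonneg (g (r * t) - h (r * t))]

theorem pow_mul_radialMean (n : ℕ) (g : ℝ → ℝ) (r : ℝ) :
    r ^ (n + 1) * radialMean n g r = ∫ s in (0:ℝ)..r, s ^ n * g s := by
  have h := intervalIntegral.mul_integral_comp_mul_left (a := 0) (b := 1)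
    (f := fun s => s ^ n * g s) r
  rw [mul_zero, mul_one] at h
  rw [← h, radialMean, pow_succ', mul_assoc, ← intervalIntegral.integral_const_mul]
  congr 1
  apply intervalIntegral.integral_congr
  intro t _
  simp only
  ring

theorem radialMean_zero (n : ℕ) (g : ℝ → ℝ) : radialMean n g 0 = g 0 / (n + 1) := by
  simp only [radialMean, zero_mul, intervalIntegral.integral_mul_const, integral_pow]
  simp
  ring

theorem radialMean_pos (n : ℕ) {g : ℝ → ℝ} (hg : Continuous g) {r : ℝ}
    (h : ∀ t ∈ Ioo (0:ℝ) 1, 0 < g (r * t)) : 0 < radialMean n g r :=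
  intervalIntegral.intervalIntegral_pos_of_pos_on (intervalIntegrable_radialMean n hg r)
    (fun t ht => mul_pos (pow_pos ht.1 n) (h t ht)) one_pos

theorem radialMean_le (n : ℕ) {g : ℝ → ℝ} (hg : Continuous g) {r C : ℝ} (hC : 0 ≤ C)
    (h : ∀ t ∈ Icc (0:ℝ) 1, g (r * t) ≤ C) : radialMean n g r ≤ C := by
  have h1 : radialMean n g r ≤ ∫ _ in (0:ℝ)..1, C := by
    refine intervalIntegral.integral_mono_on zero_le_one (intervalIntegrable_radialMean n hg r)
      (by simp) fun t ht => ?_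
    have h2 : t ^ n ≤ 1 := pow_le_one₀ ht.1 ht.2
    have h3 : 0 ≤ t ^ n := pow_nonneg ht.1 n
    nlinarith [h t ht]
  simpa using h1

theorem hasDerivAt_const_add_integral {g : ℝ → ℝ} (hg : Continuous g) (d r : ℝ) :
    HasDerivAt (fun r => d + ∫ s in (0:ℝ)..r, g s) (g r) r :=
  (hg.integral_hasStrictDerivAt 0 r).hasDerivAt.const_add d

/-- A radial solution of `u'' + (n / r) u' = G r u` on `[0, 1]` with `u(0) = d` and `u'(0) = 0`,
in integrated form with `u'(r) = r * v r`. -/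
structure IsRadialSolution (n : ℕ) (G : ℝ → ℝ → ℝ) (d : ℝ) (u v : ℝ → ℝ) : Prop where
  continuous_mean : Continuous v
  hasDerivAt : ∀ r, HasDerivAt u (r * v r) r
  apply_zero : u 0 = d
  mean_eq : ∀ r ∈ Icc (0:ℝ) 1, v r = radialMean n (fun s => G s (u s)) r

theorem IsRadialSolution.continuous {n : ℕ} {G : ℝ → ℝ → ℝ} {d : ℝ} {u v : ℝ → ℝ}
    (h : IsRadialSolution n G d u v) : Continuous u :=
  continuous_iff_continuousAt.2 fun r => (h.hasDerivAt r).continuousAt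

section Volterra

variable {n : ℕ} {G : ℝ → ℝ → ℝ} {L : ℝ}

/-- Extension to `ℝ` of `r ↦ exp (L r²) y(r)`. -/
noncomputable def weightedExtend (L : ℝ) (y : C(Icc (0:ℝ) 1, ℝ)) (s : ℝ) : ℝ :=
  Real.exp (L * s ^ 2) * y (projIcc 0 1 zero_le_one s)

theorem continuous_weightedExtend (L : ℝ) (y : C(Icc (0:ℝ) 1, ℝ)) :
    Continuous (weightedExtend L y) := by
  unfold weightedExtend
  have := continuous_projIcc (a := (0:ℝ)) (b := 1) (h := zero_le_one)
  fun_prop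

/-- The weighted mean entering the integral form of the radial equation. -/
noncomputable def volterraMean (n : ℕ) (G : ℝ → ℝ → ℝ) (L : ℝ) (y : C(Icc (0:ℝ) 1, ℝ)) : ℝ → ℝ :=
  radialMean n fun s => G s (weightedExtend L y s)

theorem continuous_volterraIntegrand (hG : Continuous (Function.uncurry G))
    (y : C(Icc (0:ℝ) 1, ℝ)) : Continuous fun s => G s (weightedExtend L y s) :=
  hG.comp (continuous_id.prodMk (continuous_weightedExtend L y))

theorem continuous_volterraMean (hG : Continuous (Function.uncurry G))
    (y : C(Icc (0:ℝ) 1, ℝ)) : Continuous (volterraMean n G L y) :=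
  continuous_radialMean n (continuous_volterraIntegrand hG y)

theorem continuous_volterraPrimitive (hG : Continuous (Function.uncurry G)) (d : ℝ)
    (y : C(Icc (0:ℝ) 1, ℝ)) :
    Continuous fun r => d + ∫ s in (0:ℝ)..r, s * volterraMean n G L y s :=
  continuous_iff_continuousAt.2 fun r => (hasDerivAt_const_add_integral
    (continuous_id.mul (continuous_volterraMean hG y)) d r).continuousAt

/-- The integral operator of the radial equation, conjugated by the weight `exp (L r²)`. -/
noncomputable def volterra (n : ℕ) (L : ℝ) (hG : Continuous (Function.uncurry G)) (d : ℝ)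
    (y : C(Icc (0:ℝ) 1, ℝ)) : C(Icc (0:ℝ) 1, ℝ) where
  toFun r := Real.exp (-(L * (r:ℝ) ^ 2)) *
    (d + ∫ s in (0:ℝ)..r, s * volterraMean n G L y s)
  continuous_toFun := by
    have := (continuous_volterraPrimitive (n := n) (L := L) hG d y).comp
      (continuous_subtype_val (p := (· ∈ Icc (0:ℝ) 1)))
    exact Continuous.mul (by fun_prop) this

theorem abs_volterraMean_sub_le (hG : Continuous (Function.uncurry G)) (hL : 0 < L)
    (hGL : ∀ s x y, |G s x - G s y| ≤ L * |x - y|) (y z : C(Icc (0:ℝ) 1, ℝ)) (r : ℝ) :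
    |volterraMean n G L y r - volterraMean n G L z r| ≤
      L * (Real.exp (L * r ^ 2) * dist y z) := by
  refine abs_radialMean_sub_le n (continuous_volterraIntegrand hG y)
    (continuous_volterraIntegrand hG z) fun t ht => (hGL _ _ _).trans ?_
  refine mul_le_mul_of_nonneg_left ?_ hL.le
  rw [weightedExtend, weightedExtend, ← mul_sub, abs_mul, Real.abs_exp]
  refine mul_le_mul (Real.exp_le_exp.2 (mul_le_mul_of_nonneg_left ?_ hL.le))
    ((Real.dist_eq _ _).symm.trans_le (ContinuousMap.dist_apply_le_dist _)) (abs_nonneg _)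
    (Real.exp_pos _).le
  rw [mul_pow]
  exact mul_le_of_le_one_right (sq_nonneg r) (pow_le_one₀ ht.1 ht.2)

theorem contractingWith_volterra (hG : Continuous (Function.uncurry G)) (hL : 0 < L)
    (hGL : ∀ s x y, |G s x - G s y| ≤ L * |x - y|) (d : ℝ) :
    ContractingWith (1 / 2) (volterra n L hG d) := by
  refine ⟨by rw [← NNReal.coe_lt_coe]; norm_num, LipschitzWith.of_dist_le_mul fun y z => ?_⟩
  rw [ContinuousMap.dist_le (by positivity)]
  rintro ⟨r, hr⟩
  set D := dist y z with hD
  have hD0 : 0 ≤ D := dist_nonneg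
  have key : |(∫ s in (0:ℝ)..r, s * volterraMean n G L y s) -
      ∫ s in (0:ℝ)..r, s * volterraMean n G L z s| ≤ D / 2 * Real.exp (L * r ^ 2) := by
    have hy := continuous_volterraMean (n := n) (L := L) hG y
    have hz := continuous_volterraMean (n := n) (L := L) hG z
    rw [← intervalIntegral.integral_sub (Continuous.intervalIntegrable (by fun_prop) _ _)
      (Continuous.intervalIntegrable (by fun_prop) _ _), ← Real.norm_eq_abs]
    have hcont : Continuous fun s : ℝ => s * (L * (Real.exp (L * s ^ 2) * D)) := by fun_prop
    have hint : ∫ s in (0:ℝ)..r, s * (L * (Real.exp (L * s ^ 2) * D)) =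
        D / 2 * Real.exp (L * r ^ 2) - D / 2 * Real.exp (L * 0 ^ 2) := by
      apply intervalIntegral.integral_eq_sub_of_hasDerivAt _ (hcont.intervalIntegrable _ _)
      intro s _
      have := (((hasDerivAt_pow 2 s).const_mul L).exp).const_mul (D / 2)
      refine this.congr_deriv ?_
      push_cast
      ring
    refine (intervalIntegral.norm_integral_le_of_norm_le hr.1 (Eventually.of_forall ?_)
      (hcont.intervalIntegrable _ _)).trans (hint.trans_le ?_)
    · intro s hs
      rw [← mul_sub, norm_mul, Real.norm_of_nonneg hs.1.le, Real.norm_eq_abs]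
      exact mul_le_mul_of_nonneg_left (abs_volterraMean_sub_le hG hL hGL y z s) hs.1.le
    · have : 0 ≤ D / 2 * Real.exp (L * 0 ^ 2) := by positivity
      linarith
  rw [Real.dist_eq]
  simp only [volterra, ContinuousMap.coe_mk]
  rw [← mul_sub, add_sub_add_left_eq_sub, abs_mul, Real.abs_exp, Real.exp_neg,
    inv_mul_le_iff₀ (Real.exp_pos _)]
  refine key.trans (le_of_eq ?_)
  push_cast
  ring

theorem dist_volterra_le (hG : Continuous (Function.uncurry G)) (hL : 0 < L) (d e : ℝ)
    (y : C(Icc (0:ℝ) 1, ℝ)) : dist (volterra n L hG d y) (volterra n L hG e y) ≤ |d - e| := by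
  rw [ContinuousMap.dist_le (abs_nonneg _)]
  rintro ⟨r, hr⟩
  rw [Real.dist_eq]
  simp only [volterra, ContinuousMap.coe_mk]
  rw [← mul_sub, add_sub_add_right_eq_sub, abs_mul, Real.abs_exp]
  have : Real.exp (-(L * r ^ 2)) ≤ 1 := Real.exp_le_one_iff.2 (by nlinarith [sq_nonneg r])
  nlinarith [abs_nonneg (d - e)]

/-- Solutions of the singular initial value problem exist on `[0, 1]` and depend on the initial
value in a Lipschitz way. -/
theorem exists_isRadialSolution_lipschitz (n : ℕ) (hG : Continuous (Function.uncurry G))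
    (hL : 0 < L) (hGL : ∀ s x y, |G s x - G s y| ≤ L * |x - y|) (hG0 : ∀ s, G s 0 = 0) :
    ∃ C : ℝ, 0 < C ∧ ∃ U V : ℝ → ℝ → ℝ, (∀ d, IsRadialSolution n G d (U d) (V d)) ∧
      (∀ r ∈ Icc (0:ℝ) 1, U 0 r = 0) ∧
      (∀ d e, ∀ r ∈ Icc (0:ℝ) 1, |U d r - U e r| ≤ C * |d - e|) ∧
      ∀ d e, ∀ r ∈ Icc (0:ℝ) 1, |V d r - V e r| ≤ C * |d - e| := by
  have hc := contractingWith_volterra (n := n) hG hL hGL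
  set Y : ℝ → C(Icc (0:ℝ) 1, ℝ) := fun d => (hc d).fixedPoint with hY
  have hYfix : ∀ d, volterra n L hG d (Y d) = Y d := fun d => (hc d).fixedPoint_isFixedPt
  have hYdist : ∀ d e, dist (Y d) (Y e) ≤ 2 * |d - e| := fun d e => by
    refine ((hc d).fixedPoint_lipschitz_in_map (hc e) (dist_volterra_le hG hL d e)).trans
      (le_of_eq ?_)
    push_cast
    ring
  set V : ℝ → ℝ → ℝ := fun d => volterraMean n G L (Y d) with hV
  set U : ℝ → ℝ → ℝ := fun d r => d + ∫ s in (0:ℝ)..r, s * V d s with hU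
  have hVc : ∀ d, Continuous (V d) := fun d => continuous_volterraMean hG _
  have hUY : ∀ d, ∀ r ∈ Icc (0:ℝ) 1, U d r = weightedExtend L (Y d) r := fun d r hr => by
    have := congrArg (fun w : C(Icc (0:ℝ) 1, ℝ) => w ⟨r, hr⟩) (hYfix d)
    simp only [volterra, ContinuousMap.coe_mk] at this
    rw [weightedExtend, projIcc_of_mem _ hr, ← this, ← mul_assoc, ← Real.exp_add]
    simp [hU, hV]
  have hexp : ∀ r ∈ Icc (0:ℝ) 1, L * r ^ 2 ≤ L := fun r hr =>
    mul_le_of_le_one_right hL.le (pow_le_one₀ hr.1 hr.2)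
  have hY0 : Y 0 = 0 := by
    symm
    apply (hc 0).fixedPoint_unique
    ext r
    simp [volterra, volterraMean, weightedExtend, radialMean, hG0]
  refine ⟨(1 + L) * Real.exp L * 2, by positivity, U, V, fun d => ⟨hVc d, fun r =>
    hasDerivAt_const_add_integral (continuous_id.mul (hVc d)) d r, by simp [hU], ?_⟩, ?_, ?_, ?_⟩
  · intro r hr
    simp only [hV, volterraMean, radialMean]
    apply intervalIntegral.integral_congr
    intro t ht
    rw [uIcc_of_le zero_le_one] at ht
    simp only
    rw [← hUY d (r * t) ⟨mul_nonneg hr.1 ht.1, mul_le_one₀ hr.2 ht.1 ht.2⟩]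
  · intro r hr
    rw [hUY 0 r hr, hY0]
    simp [weightedExtend]
  · intro d e r hr
    rw [hUY d r hr, hUY e r hr, weightedExtend, weightedExtend, ← mul_sub, abs_mul, Real.abs_exp]
    have h1 := (ContinuousMap.dist_apply_le_dist (f := Y d) (g := Y e)
      (projIcc 0 1 zero_le_one r)).trans (hYdist d e)
    rw [Real.dist_eq] at h1
    calc _ ≤ Real.exp L * (2 * |d - e|) := by gcongr; exact hexp r hr
      _ ≤ _ := by nlinarith [mul_nonneg hL.le (mul_nonneg (Real.exp_pos L).le (abs_nonneg (d - e)))]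
  · intro d e r hr
    calc _ ≤ L * (Real.exp (L * r ^ 2) * dist (Y d) (Y e)) :=
          abs_volterraMean_sub_le hG hL hGL _ _ r
      _ ≤ L * (Real.exp L * (2 * |d - e|)) := by gcongr; exacts [hexp r hr, hYdist d e]
      _ ≤ _ := by nlinarith [mul_nonneg (Real.exp_pos L).le (abs_nonneg (d - e))]

end Volterra

theorem le_mul_exp_of_deriv_le {φ φ' : ℝ → ℝ} {r₀ r : ℝ} (hr : r₀ ≤ r)
    (hφ : ∀ s, HasDerivAt φ (φ' s) s) (h : ∀ s ∈ Icc r₀ r, φ' s ≤ φ s) :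
    φ r ≤ φ r₀ * Real.exp (r - r₀) := by
  have hd : ∀ s, HasDerivAt (fun s => φ s * Real.exp (-s)) ((φ' s - φ s) * Real.exp (-s)) s :=
    fun s => ((hφ s).mul (hasDerivAt_neg s).exp).congr_deriv (by ring)
  have ha : AntitoneOn (fun s => φ s * Real.exp (-s)) (Icc r₀ r) := by
    refine antitoneOn_of_deriv_nonpos (convex_Icc _ _)
      (fun s _ => (hd s).continuousAt.continuousWithinAt)
      (fun s _ => (hd s).differentiableAt.differentiableWithinAt) fun s hs => ?_
    rw [(hd s).deriv]
    exact mul_nonpos_of_nonpos_of_nonneg (sub_nonpos.2 (h s (interior_subset hs)))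
      (Real.exp_pos _).le
  have h1 := ha (left_mem_Icc.2 hr) (right_mem_Icc.2 hr) hr
  simp only [Real.exp_neg] at h1
  rw [Real.exp_sub, mul_div_assoc', le_div_iff₀ (Real.exp_pos _)]
  have e1 := Real.exp_pos r
  have e2 := Real.exp_pos r₀
  rw [← div_eq_mul_inv, ← div_eq_mul_inv, div_le_div_iff₀ e1 e2] at h1
  exact h1

namespace IsRadialSolution

variable {n : ℕ} {G : ℝ → ℝ → ℝ} {d : ℝ} {u v : ℝ → ℝ}

theorem monotoneOn (h : IsRadialSolution n G d u v) {b : ℝ} (hv : ∀ r ∈ Icc (0:ℝ) b, 0 ≤ v r) :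
    MonotoneOn u (Icc 0 b) := by
  refine monotoneOn_of_deriv_nonneg (convex_Icc _ _) h.continuous.continuousOn
    (fun s _ => (h.hasDerivAt s).differentiableAt.differentiableWithinAt) fun s hs => ?_
  rw [(h.hasDerivAt s).deriv]
  have := interior_subset hs
  exact mul_nonneg this.1 (hv s this)

theorem continuous_rhs (h : IsRadialSolution n G d u v) (hG : Continuous (Function.uncurry G)) :
    Continuous fun s => G s (u s) :=
  hG.comp (continuous_id.prodMk h.continuous)

/-- As long as `G` is positive at the values taken by a positive solution, the solution
increases. -/
theorem mean_pos (h : IsRadialSolution n G d u v) (hG : Continuous (Function.uncurry G))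
    (hd : 0 < d) {δ : ℝ} (hδ : ∀ r ∈ Icc (0:ℝ) 1, u r ≤ δ)
    (hpos : ∀ r ∈ Icc (0:ℝ) 1, ∀ x ∈ Ioc 0 δ, 0 < G r x) : ∀ r ∈ Icc (0:ℝ) 1, 0 < v r := by
  have step : ∀ r ∈ Icc (0:ℝ) 1, (∀ s ∈ Ioo (0:ℝ) r, 0 < u s) → 0 < u 0 → 0 < v r := by
    intro r hr hu hu0
    rw [h.mean_eq r hr]
    refine radialMean_pos n (h.continuous_rhs hG) fun t ht => ?_
    have hrt : r * t ∈ Icc (0:ℝ) 1 :=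
      ⟨mul_nonneg hr.1 ht.1.le, mul_le_one₀ hr.2 ht.1.le ht.2.le⟩
    refine hpos _ hrt _ ⟨?_, hδ _ hrt⟩
    rcases hr.1.eq_or_lt with rfl | hr0
    · simpa using hu0
    · exact hu _ ⟨mul_pos hr0 ht.1, mul_lt_of_lt_one_right hr0 ht.2⟩
  have hu0 : 0 < u 0 := h.apply_zero ▸ hd
  have hu : ∀ r ∈ Icc (0:ℝ) 1, 0 < u r := by
    by_contra! hne
    obtain ⟨r, hr, hur⟩ := hne
    have hK : IsCompact (Icc (0:ℝ) 1 ∩ u ⁻¹' Iic 0) :=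
      isCompact_Icc.inter_right (isClosed_Iic.preimage h.continuous)
    obtain ⟨b, ⟨hb, hub⟩, hmin⟩ := hK.exists_isLeast ⟨r, hr, hur⟩
    have hbef : ∀ s ∈ Ico (0:ℝ) b, 0 < u s := fun s hs => by
      by_contra! hs'
      exact hs.2.not_ge (hmin ⟨⟨hs.1, hs.2.le.trans hb.2⟩, hs'⟩)
    have hm := h.monotoneOn (b := b) fun s hs => (step s ⟨hs.1, hs.2.trans hb.2⟩
      (fun x hx => hbef x ⟨hx.1.le, hx.2.trans_le hs.2⟩) hu0).le
    have := hm (left_mem_Icc.2 hb.1) (right_mem_Icc.2 hb.1) hb.1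
    have hub' : u b ≤ 0 := hub
    linarith
  exact fun r hr => step r hr (fun s hs => hu s ⟨hs.1.le, hs.2.le.trans hr.2⟩) hu0

theorem le_mul_exp (h : IsRadialSolution n G d u v) (hG : Continuous (Function.uncurry G))
    (hd : 0 < d) (hGle : ∀ r ∈ Icc (0:ℝ) 1, ∀ x, 0 ≤ x → G r x ≤ x)
    (hv : ∀ r ∈ Icc (0:ℝ) 1, 0 ≤ v r) : ∀ r ∈ Icc (0:ℝ) 1, u r ≤ d * Real.exp r := by
  have hm := h.monotoneOn hv
  have hu0 : ∀ r ∈ Icc (0:ℝ) 1, 0 ≤ u r := fun r hr =>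
    (h.apply_zero ▸ hd.le).trans (hm (left_mem_Icc.2 zero_le_one) hr hr.1)
  intro r hr
  have := le_mul_exp_of_deriv_le hr.1 h.hasDerivAt fun s hs => by
    have hs1 : s ∈ Icc (0:ℝ) 1 := ⟨hs.1, hs.2.trans hr.2⟩
    have : v s ≤ u s := by
      rw [h.mean_eq s hs1]
      refine radialMean_le n (h.continuous_rhs hG) (hu0 s hs1) fun t ht => ?_
      have hst : s * t ∈ Icc (0:ℝ) 1 := ⟨mul_nonneg hs.1 ht.1, mul_le_one₀ hs1.2 ht.1 ht.2⟩
      exact (hGle _ hst _ (hu0 _ hst)).trans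
        (hm hst hs1 (mul_le_of_le_one_right hs.1 ht.2))
    nlinarith [hu0 s hs1, hs1.1, hs1.2]
  simpa [h.apply_zero] using this

/-- The flux `r ^ n * u'(r)`. -/
theorem pow_mul_mean (h : IsRadialSolution n G d u v) {r : ℝ} (hr : r ∈ Icc (0:ℝ) 1) :
    r ^ (n + 1) * v r = ∫ s in (0:ℝ)..r, s ^ n * G s (u s) := by
  rw [h.mean_eq r hr, pow_mul_radialMean]

theorem hasDerivAt_flux (h : IsRadialSolution n G d u v) (hG : Continuous (Function.uncurry G))
    (r : ℝ) : HasDerivAt (fun r => ∫ s in (0:ℝ)..r, s ^ n * G s (u s)) (r ^ n * G r (u r)) r :=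
  (Continuous.integral_hasStrictDerivAt ((continuous_pow n).mul (h.continuous_rhs hG)) 0
    r).hasDerivAt

theorem rhs_eq_zero (h : IsRadialSolution n G d u v) (hG : Continuous (Function.uncurry G))
    (hv : ∀ r ∈ Icc (0:ℝ) 1, 0 ≤ v r) {r₀ : ℝ} (hr₀ : r₀ ∈ Ico (0:ℝ) 1) (hv₀ : v r₀ = 0) :
    G r₀ (u r₀) = 0 := by
  have hr₁ : r₀ ∈ Icc (0:ℝ) 1 := Ico_subset_Icc_self hr₀
  rcases hr₀.1.eq_or_lt with rfl | hpos
  · rw [h.mean_eq 0 hr₁, radialMean_zero] at hv₀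
    have : (n + 1 : ℝ) ≠ 0 := by positivity
    simpa [this] using hv₀
  · have hmin : IsLocalMin (fun r => ∫ s in (0:ℝ)..r, s ^ n * G s (u s)) r₀ := by
      filter_upwards [Icc_mem_nhds hpos hr₀.2] with r hr
      rw [← h.pow_mul_mean hr, ← h.pow_mul_mean hr₁, hv₀, mul_zero]
      exact mul_nonneg (pow_nonneg hr.1 _) (hv r hr)
    have := hmin.hasDerivAt_eq_zero (h.hasDerivAt_flux hG r₀)
    exact (mul_eq_zero.1 this).resolve_left (pow_pos hpos n).ne'

/-- A form of the strong maximum principle: if `u' ≥ 0` degenerates somewhere, then `u'(1) = 0`. -/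
theorem mean_one_eq_zero (h : IsRadialSolution n G d u v) (hG : Continuous (Function.uncurry G))
    (hmono : ∀ r ∈ Icc (0:ℝ) 1, ∀ s ∈ Icc (0:ℝ) 1, ∀ x y, 0 ≤ x → r ≤ s → x ≤ y →
      G s y - G r x ≤ y - x)
    (hd : 0 < d) (hv : ∀ r ∈ Icc (0:ℝ) 1, 0 ≤ v r) {r₀ : ℝ} (hr₀ : r₀ ∈ Icc (0:ℝ) 1)
    (hv₀ : v r₀ = 0) : v 1 = 0 := by
  rcases hr₀.2.eq_or_lt with rfl | hlt
  · exact hv₀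
  have hg₀ := h.rhs_eq_zero hG hv ⟨hr₀.1, hlt⟩ hv₀
  have hm := h.monotoneOn hv
  have hu₀ : 0 ≤ u r₀ :=
    (h.apply_zero ▸ hd.le).trans (hm (left_mem_Icc.2 zero_le_one) hr₀ hr₀.1)
  have hint : ∀ a b : ℝ, IntervalIntegrable (fun s => s ^ n * G s (u s)) MeasureTheory.volume a b :=
    fun a b => ((continuous_pow n).mul (h.continuous_rhs hG)).intervalIntegrable a b
  have hflux : ∀ r ∈ Icc r₀ 1, r * v r ≤ u r - u r₀ := by
    intro r hr
    have hr1 : r ∈ Icc (0:ℝ) 1 := ⟨hr₀.1.trans hr.1, hr.2⟩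
    have hφ : 0 ≤ u r - u r₀ := sub_nonneg.2 (hm hr₀ hr1 hr.1)
    rcases hr1.1.eq_or_lt with rfl | hpos
    · simpa using hφ
    have h0 : ∫ s in (0:ℝ)..r₀, s ^ n * G s (u s) = 0 := by
      rw [← h.pow_mul_mean hr₀, hv₀, mul_zero]
    have h1 : r ^ (n + 1) * v r = ∫ s in r₀..r, s ^ n * G s (u s) := by
      rw [h.pow_mul_mean hr1, ← intervalIntegral.integral_add_adjacent_intervals
        (hint 0 r₀) (hint r₀ r), h0, zero_add]
    have h2 : ∫ s in r₀..r, s ^ n * G s (u s) ≤ ∫ _ in r₀..r, r ^ n * (u r - u r₀) := by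
      refine intervalIntegral.integral_mono_on hr.1 (hint _ _) (by simp) fun s hs => ?_
      have hs1 : s ∈ Icc (0:ℝ) 1 := ⟨hr₀.1.trans hs.1, hs.2.trans hr.2⟩
      have hus : u s ≤ u r := hm hs1 hr1 hs.2
      have := hmono r₀ hr₀ s hs1 (u r₀) (u s) hu₀ hs.1 (hm hr₀ hs1 hs.1)
      have hsn : 0 ≤ s ^ n := pow_nonneg hs1.1 n
      calc s ^ n * G s (u s) ≤ s ^ n * (u r - u r₀) :=
            mul_le_mul_of_nonneg_left (by linarith) hsn
        _ ≤ r ^ n * (u r - u r₀) :=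
            mul_le_mul_of_nonneg_right (pow_le_pow_left₀ hs1.1 hs.2 n) hφ
    rw [intervalIntegral.integral_const, smul_eq_mul, ← h1] at h2
    have hrn : 0 < r ^ n := pow_pos hpos n
    have h3 : (r - r₀) * (r ^ n * (u r - u r₀)) ≤ r ^ n * (u r - u r₀) :=
      mul_le_of_le_one_left (mul_nonneg hrn.le hφ) (by linarith [hr.2, hr₀.1])
    refine le_of_mul_le_mul_left ?_ hrn
    calc r ^ n * (r * v r) = r ^ (n + 1) * v r := by ring
      _ ≤ _ := h2.trans h3
  have hgron := le_mul_exp_of_deriv_le hlt.le (fun s => (h.hasDerivAt s).sub_const (u r₀)) hflux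
  rw [sub_self, zero_mul] at hgron
  have h1 : (1:ℝ) ∈ Icc (0:ℝ) 1 := right_mem_Icc.2 zero_le_one
  have := hflux 1 (right_mem_Icc.2 hlt.le)
  exact le_antisymm (by linarith) (hv 1 h1)

/-- The differential equation satisfied by `u' = r * v r`. -/
theorem hasDerivAt_deriv (h : IsRadialSolution n G d u v) (hG : Continuous (Function.uncurry G))
    {r : ℝ} (hr : r ∈ Ioo (0:ℝ) 1) :
    HasDerivAt (fun r => r * v r) (G r (u r) - n / r * (r * v r)) r := by
  have hd := (h.hasDerivAt_flux hG r).div (hasDerivAt_pow n r) (pow_pos hr.1 n).ne'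
  have he : (fun r => r * v r) =ᶠ[nhds r]
      (fun r => ∫ s in (0:ℝ)..r, s ^ n * G s (u s)) / fun r => r ^ n := by
    filter_upwards [Ioo_mem_nhds hr.1 hr.2] with s hs
    have hs' : s ^ n ≠ 0 := (pow_pos hs.1 n).ne'
    rw [Pi.div_apply, ← h.pow_mul_mean (Ioo_subset_Icc_self hs), eq_div_iff hs']
    ring
  refine (hd.congr_of_eventuallyEq he).congr_deriv ?_
  rw [← h.pow_mul_mean (Ioo_subset_Icc_self hr)]
  have hr' : r ≠ 0 := hr.1.ne'
  rcases n with _ | n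
  · simp
  · rw [Nat.add_sub_cancel]
    field_simp
    ring

end IsRadialSolution

/-- Superlinearity at infinity, read off from the lower limit. -/
theorem exists_lt_mul_of_liminf {f : ℝ → ℝ} {α : ℝ} (hα : 0 < α)
    (hf : ((1 / α : ℝ) : EReal) <
      Filter.liminf (fun s : ℝ => ((f s / s : ℝ) : EReal)) Filter.atTop) :
    ∃ K, 0 < K ∧ K < α * f K := by
  obtain ⟨K, h, hK⟩ :=
    ((Filter.eventually_lt_of_lt_liminf hf).and (eventually_gt_atTop 0)).exists
  refine ⟨K, hK, ?_⟩
  rw [EReal.coe_lt_coe_iff, div_lt_div_iff₀ hα hK] at h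
  linarith

/-- Sublinearity at the origin, read off from the derivative. -/
theorem exists_mul_lt_of_derivWithin_eq_zero {f : ℝ → ℝ} (hf : DifferentiableWithinAt ℝ f (Ici 0) 0)
    (hf0 : f 0 = 0) (hf'0 : derivWithin f (Ici 0) 0 = 0) {β : ℝ} (hβ : 0 < β) :
    ∃ δ, 0 < δ ∧ ∀ x ∈ Ioc 0 δ, β * f x < x := by
  have hd := hf.hasDerivWithinAt
  rw [hf'0, hasDerivWithinAt_iff_isLittleO] at hd
  have hev := hd.def (c := 1 / (2 * β)) (by positivity)
  obtain ⟨ε, hε, hball⟩ := Metric.mem_nhdsWithin_iff.1 hev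
  refine ⟨ε / 2, by positivity, fun x hx => ?_⟩
  have := hball ⟨by rw [Metric.mem_ball, Real.dist_eq, sub_zero, abs_of_pos hx.1]; linarith [hx.2],
    hx.1.le⟩
  simp only [mem_ofPred_eq, hf0, sub_zero, smul_zero, Real.norm_eq_abs, abs_of_pos hx.1] at this
  have h1 : f x ≤ 1 / (2 * β) * x := (le_abs_self _).trans this
  have h2 : β * (1 / (2 * β) * x) = x / 2 := by field_simp
  nlinarith [hx.1, mul_le_mul_of_nonneg_left h1 hβ.le]

/-- A continuous one-parameter family of functions on `[0, 1]` whose sign changes passes through a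
nonnegative function with a zero. -/
theorem exists_nonneg_with_zero {V : ℝ → ℝ → ℝ} {C d₀ d₁ : ℝ} (hC : 0 ≤ C)
    (hV : ∀ d, Continuous (V d))
    (hVd : ∀ d e, ∀ r ∈ Icc (0:ℝ) 1, |V d r - V e r| ≤ C * |d - e|) (hd : d₀ ≤ d₁)
    (h₀ : ∀ r ∈ Icc (0:ℝ) 1, 0 ≤ V d₀ r) (h₁ : ∃ r ∈ Icc (0:ℝ) 1, V d₁ r ≤ 0) :
    ∃ d ∈ Icc d₀ d₁, (∀ r ∈ Icc (0:ℝ) 1, 0 ≤ V d r) ∧ ∃ r ∈ Icc (0:ℝ) 1, V d r = 0 := by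
  set W : ℝ → Icc (0:ℝ) 1 → ℝ := fun d r => V d r with hW
  have hWr : ∀ d, Continuous (W d) := fun d => (hV d).comp continuous_subtype_val
  have hWc : Continuous (Function.uncurry W) :=
    continuous_prod_of_continuous_lipschitzWith _ C.toNNReal hWr fun r =>
      LipschitzWith.of_dist_le_mul fun d e => by
        rw [Real.coe_toNNReal C hC]
        exact hVd d e r r.2
  have hm : Continuous fun d => sInf (W d '' univ) := isCompact_univ.continuous_sInf hWc
  have hcomp : ∀ d, IsCompact (W d '' univ) := fun d => isCompact_univ.image (hWr d)
  have hne : ∀ d, (W d '' univ).Nonempty := fun d => univ_nonempty.image _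
  obtain ⟨d, hd, hd0⟩ := intermediate_value_Icc' hd hm.continuousOn (show (0:ℝ) ∈ Icc _ _ from by
    constructor
    · obtain ⟨r, hr, hr0⟩ := h₁
      have hmem : W d₁ ⟨r, hr⟩ ∈ W d₁ '' univ := mem_image_of_mem _ (mem_univ _)
      exact (csInf_le (hcomp d₁).bddBelow hmem).trans hr0
    · refine le_csInf (hne d₀) ?_
      rintro _ ⟨r, -, rfl⟩
      exact h₀ r r.2)
  simp only at hd0
  refine ⟨d, hd, fun r hr => ?_, ?_⟩
  · have hmem : W d ⟨r, hr⟩ ∈ W d '' univ := mem_image_of_mem _ (mem_univ _)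
    exact hd0.symm.le.trans (csInf_le (hcomp d).bddBelow hmem)
  · obtain ⟨r, -, hr⟩ := (hcomp d).sInf_mem (hne d)
    exact ⟨r, r.2, hr.trans hd0⟩

/-- Shooting argument for `u'' + (n / r) u' = u - A(r) F(u)`: between a small initial value and an
initial value at which the right-hand side is negative, some solution is nondecreasing and satisfies
the Neumann condition at `1`. -/
theorem exists_neumann_solution (n : ℕ) {A F : ℝ → ℝ} {β δ K : ℝ} {ℓ : NNReal} (hA : Continuous A)
    (hA0 : ∀ s, 0 ≤ A s) (hAβ : ∀ s, A s ≤ β) (hAm : Monotone A) (hF : LipschitzWith ℓ F)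
    (hFm : Monotone F) (hF0 : F 0 = 0) (hδ : 0 < δ) (hFδ : ∀ x ∈ Ioc 0 δ, β * F x < x)
    (hK : 0 < K) (hFK : K < A 0 * F K) :
    ∃ d ∈ Ioc 0 K, ∃ u v, IsRadialSolution n (fun s x => x - A s * F x) d u v ∧
      (∀ r ∈ Icc (0:ℝ) 1, 0 ≤ v r) ∧ v 1 = 0 := by
  set G : ℝ → ℝ → ℝ := fun s x => x - A s * F x with hGdef
  have hFc := hF.continuous
  have hG : Continuous (Function.uncurry G) := by
    simp only [hGdef, Function.uncurry_def]
    fun_prop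
  have hFnn : ∀ x, 0 ≤ x → 0 ≤ F x := fun x hx => hF0 ▸ hFm hx
  have hβ : 0 ≤ β := (hA0 0).trans (hAβ 0)
  have hGL : ∀ s x y, |G s x - G s y| ≤ (1 + β * ℓ) * |x - y| := fun s x y => by
    have h1 := hF.dist_le_mul x y
    rw [Real.dist_eq, Real.dist_eq] at h1
    calc |G s x - G s y| = |(x - y) - A s * (F x - F y)| := by simp only [hGdef]; ring_nf
      _ ≤ |x - y| + A s * |F x - F y| := by
          refine (abs_sub _ _).trans ?_
          rw [abs_mul, abs_of_nonneg (hA0 s)]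
      _ ≤ |x - y| + β * (ℓ * |x - y|) := by
          gcongr
          exact hAβ s
      _ = _ := by ring
  obtain ⟨C, hC, U, V, hsol, hU0, hUd, hVd⟩ := exists_isRadialSolution_lipschitz n hG
    (by positivity) hGL (fun s => by simp [hGdef, hF0])
  set d₀ := min (δ / C) K with hd₀
  have hd₀pos : 0 < d₀ := lt_min (by positivity) hK
  have hsmall : ∀ r ∈ Icc (0:ℝ) 1, 0 < V d₀ r := by
    refine (hsol d₀).mean_pos hG hd₀pos (δ := δ) (fun r hr => ?_) fun r _ x hx => ?_
    · have h1 := hUd d₀ 0 r hr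
      rw [hU0 r hr, sub_zero, sub_zero, abs_of_pos hd₀pos] at h1
      refine ((le_abs_self _).trans h1).trans ?_
      rw [← le_div_iff₀' hC]
      exact min_le_left _ _
    · have h1 := mul_le_mul_of_nonneg_right (hAβ r) (hFnn x hx.1.le)
      have h2 := hFδ x hx
      simp only [hGdef]
      linarith
  have hlarge : V K 0 ≤ 0 := by
    rw [(hsol K).mean_eq 0 (left_mem_Icc.2 zero_le_one), radialMean_zero, (hsol K).apply_zero]
    exact div_nonpos_of_nonpos_of_nonneg (by simp only [hGdef]; linarith) (by positivity)
  obtain ⟨d, hd, hv, r, hr, hvr⟩ := exists_nonneg_with_zero hC.le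
    (fun d => (hsol d).continuous_mean) hVd (min_le_right _ _ : d₀ ≤ K)
    (fun r hr => (hsmall r hr).le) ⟨0, left_mem_Icc.2 zero_le_one, hlarge⟩
  have hdpos := hd₀pos.trans_le hd.1
  refine ⟨d, ⟨hdpos, hd.2⟩, U d, V d, hsol d, hv, (hsol d).mean_one_eq_zero hG ?_ hdpos hv hr hvr⟩
  intro r _ s _ x y hx hrs hxy
  have := mul_le_mul (hAm hrs) (hFm hxy) (hFnn x hx) (hA0 s)
  simp only [hGdef]
  linarith

/-- Existence of a nonconstant nondecreasing positive radial solution of the Neumann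
problem `-Δu + u = a(|x|) f(u)` in the unit ball, written in radial coordinates. -/
theorem stmt_0 (N : ℕ) (hN : 2 ≤ N) (a f : ℝ → ℝ)
    (ha_diff : ContDiffOn ℝ 1 a (Icc 0 1))
    (ha_mono : MonotoneOn a (Icc 0 1))
    (ha_nonconst : ∃ r ∈ Icc (0:ℝ) 1, ∃ s ∈ Icc (0:ℝ) 1, a r ≠ a s)
    (ha0 : 0 < a 0)
    (hf_diff : ContDiffOn ℝ 1 f (Ici 0))
    (hf_mono : MonotoneOn f (Ici 0))
    (hf0 : f 0 = 0)
    (hf'0 : derivWithin f (Ici 0) 0 = 0)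
    (hf_liminf : ((1 / a 0 : ℝ) : EReal) <
      Filter.liminf (fun s : ℝ => ((f s / s : ℝ) : EReal)) Filter.atTop) :
    ∃ u u' u'' : ℝ → ℝ,
      (∀ r ∈ Icc (0:ℝ) 1, HasDerivWithinAt u (u' r) (Icc 0 1) r) ∧
      ContinuousOn u' (Icc 0 1) ∧
      (∀ r ∈ Ioo (0:ℝ) 1, HasDerivAt u' (u'' r) r) ∧
      u' 0 = 0 ∧ u' 1 = 0 ∧
      (∀ r ∈ Icc (0:ℝ) 1, 0 < u r) ∧
      MonotoneOn u (Icc 0 1) ∧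
      (∃ r ∈ Icc (0:ℝ) 1, ∃ s ∈ Icc (0:ℝ) 1, u r ≠ u s) ∧
      (∀ r ∈ Ioo (0:ℝ) 1,
        -u'' r - ((N : ℝ) - 1) / r * u' r + u r = a r * f (u r)) := by
  have h0 : (0:ℝ) ∈ Icc (0:ℝ) 1 := left_mem_Icc.2 zero_le_one
  have h1 : (1:ℝ) ∈ Icc (0:ℝ) 1 := right_mem_Icc.2 zero_le_one
  obtain ⟨K, hK, hfK⟩ := exists_lt_mul_of_liminf ha0 hf_liminf
  obtain ⟨δ, hδ, hfδ⟩ := exists_mul_lt_of_derivWithin_eq_zero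
    ((hf_diff.differentiableOn one_ne_zero) 0 self_mem_Ici) hf0 hf'0
    (ha0.trans_le (ha_mono h0 h1 zero_le_one))
  -- Solutions starting below `K` stay below `M` as long as they increase: truncate `f` at `M`.
  set M : ℝ := K * Real.exp 1 with hM
  have hKM : K ≤ M := le_mul_of_one_le_right hK.le (Real.one_le_exp zero_le_one)
  have hM0 : 0 ≤ M := hK.le.trans hKM
  set A : ℝ → ℝ := IccExtend zero_le_one ((Icc (0:ℝ) 1).domRestrict a) with hA
  set F : ℝ → ℝ := IccExtend hM0 ((Icc 0 M).domRestrict f) with hF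
  have hAa : ∀ r ∈ Icc (0:ℝ) 1, A r = a r := fun r hr => IccExtend_of_mem _ _ hr
  have hFf : ∀ x ∈ Icc 0 M, F x = f x := fun x hx => IccExtend_of_mem _ _ hx
  have hAc : Continuous A := continuous_IccExtend_iff.2 ha_diff.continuousOn.domRestrict
  have hAm : Monotone A := Monotone.IccExtend zero_le_one fun x y h => ha_mono x.2 y.2 h
  have hFm : Monotone F := Monotone.IccExtend hM0 fun x y h => hf_mono x.2.1 y.2.1 h
  have hA0 : ∀ s, 0 ≤ A s := fun s =>
    ha0.le.trans (ha_mono h0 (projIcc 0 1 zero_le_one s).2 (projIcc 0 1 zero_le_one s).2.1)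
  have hA1 : ∀ s, A s ≤ a 1 := fun s =>
    ha_mono (projIcc 0 1 zero_le_one s).2 h1 (projIcc 0 1 zero_le_one s).2.2
  have hF0 : F 0 = 0 := (hFf 0 ⟨le_rfl, hM0⟩).trans hf0
  obtain ⟨ℓ, hℓ⟩ := (hf_diff.mono (Icc_subset_Ici_self : Icc 0 M ⊆ Ici 0)).exists_lipschitzOnWith
    one_ne_zero (convex_Icc 0 M) isCompact_Icc
  have hFL : LipschitzWith (ℓ * 1) F :=
    (lipschitzOnWith_iff_restrict.1 hℓ).comp (LipschitzWith.projIcc hM0)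
  obtain ⟨d, hd, u, v, hu, hv, hv1⟩ := exists_neumann_solution (N - 1) (δ := min δ M) hAc hA0 hA1
    hAm hFL hFm hF0 (lt_min hδ (hK.trans_le hKM))
    (fun x hx => by
      rw [hFf x ⟨hx.1.le, hx.2.trans (min_le_right _ _)⟩]
      exact hfδ x ⟨hx.1, hx.2.trans (min_le_left _ _)⟩) hK
    (by rwa [hAa 0 h0, hFf K ⟨hK.le, hKM⟩])
  have hG : Continuous (Function.uncurry fun s x => x - A s * F x) := by
    have := hFL.continuous
    simp only [Function.uncurry_def]
    fun_prop
  have hmono := hu.monotoneOn hv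
  have hpos : ∀ r ∈ Icc (0:ℝ) 1, 0 < u r := fun r hr =>
    (hu.apply_zero ▸ hd.1).trans_le (hmono h0 hr hr.1)
  have hle : ∀ r ∈ Icc (0:ℝ) 1, u r ≤ M := fun r hr => by
    refine (hu.le_mul_exp hG hd.1 (fun r _ x hx => ?_) hv r hr).trans
      (mul_le_mul hd.2 (Real.exp_le_exp.2 hr.2) (Real.exp_pos _).le hK.le)
    have := mul_nonneg (hA0 r) (hF0 ▸ hFm hx : 0 ≤ F x)
    linarith
  have hAF : ∀ r ∈ Icc (0:ℝ) 1, A r * F (u r) = a r * f (u r) := fun r hr => by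
    rw [hAa r hr, hFf _ ⟨(hpos r hr).le, hle r hr⟩]
  have hNcast : ((N - 1 : ℕ) : ℝ) = (N : ℝ) - 1 := by
    rw [Nat.cast_sub (by omega), Nat.cast_one]
  have hderiv := fun r (hr : r ∈ Ioo (0:ℝ) 1) => hu.hasDerivAt_deriv hG hr
  refine ⟨u, fun r => r * v r, fun r => (u r - A r * F (u r)) - ((N - 1 : ℕ) : ℝ) / r * (r * v r),
    fun r _ => (hu.hasDerivAt r).hasDerivWithinAt, (continuous_id.mul hu.continuous_mean).continuousOn,
    hderiv, zero_mul _, by simp only [hv1, mul_zero], hpos, hmono, ?_, fun r hr => ?_⟩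
  · by_contra! hconst
    have hv0 : ∀ r ∈ Ioo (0:ℝ) 1, r * v r = 0 := fun r hr => by
      refine (hu.hasDerivAt r).unique ((hasDerivAt_const r (u 0)).congr_of_eventuallyEq ?_)
      filter_upwards [Icc_mem_nhds hr.1 hr.2] with s hs using hconst s hs 0 h0
    have hode : ∀ r ∈ Ioo (0:ℝ) 1, A r * F (u 0) = u 0 := fun r hr => by
      have hz : HasDerivAt (fun r => r * v r) 0 r := by
        refine (hasDerivAt_const r (0:ℝ)).congr_of_eventuallyEq ?_
        filter_upwards [Ioo_mem_nhds hr.1 hr.2] with s hs using hv0 s hs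
      have := (hderiv r hr).unique hz
      rw [hv0 r hr, hconst r (Ioo_subset_Icc_self hr) 0 h0] at this
      linarith
    have hode' : ∀ r ∈ Icc (0:ℝ) 1, A r * F (u 0) = u 0 := by
      have hcl : closure (Ioo (0:ℝ) 1) ⊆ {r | A r * F (u 0) = u 0} :=
        closure_minimal hode (isClosed_eq (by fun_prop) continuous_const)
      rwa [closure_Ioo zero_ne_one] at hcl
    obtain ⟨r, hr, s, hs, hne⟩ := ha_nonconst
    have hFne : F (u 0) ≠ 0 := fun h => by
      have := hode' 0 h0
      rw [h, mul_zero] at this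
      exact (hpos 0 h0).ne this
    rw [← hAa r hr, ← hAa s hs] at hne
    exact hne (mul_right_cancel₀ hFne ((hode' r hr).trans (hode' s hs).symm))
  · simp only
    rw [hAF r (Ioo_subset_Icc_self hr), hNcast]
    ring
end

section
/- Let N ≥ 2. Let a : [0,1] → ℝ be continuously differentiable, nondecreasing, nonconstant, with a(0) > 0. Let b : [0,1] → ℝ be continuous and nonpositive, such that the map r ↦ r·b(r) is differentiable on (0,1) with derivative satisfying (d/dr)(b(r)·r) > −1 − (N−1)/r² for all r ∈ (0,1). Let f : [0,∞) → ℝ be continuously differentiable and nondecreasing with f(0) = 0, f'(0) = 0, and liminf_{s→+∞} f(s)/s > 1/a(0). Then there exists a function u : [0,1] → ℝ that is continuously differentiable on [0,1], twice differentiable on (0,1), satisfies u'(0) = u'(1) = 0, u(r) > 0 for all r ∈ [0,1], u is nondecreasing, u is nonconstant, and −u''(r) + (b(r)·r − (N−1)/r)·u'(r) + u(r) = a(r)·f(u(r)) for all r ∈ (0,1). -/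
open Set Filter

/-- The weighted primitive `r ↦ p(r)⁻¹ ∫₀ʳ p h`, which solves `(p w)' = p h`, `w(0) = 0`. -/
noncomputable def weightedPrimitive (p h : ℝ → ℝ) (r : ℝ) : ℝ :=
  (∫ t in (0:ℝ)..r, p t * h t) / p r

/-- A continuous weight on `[0, ∞)` that is nondecreasing, and positive away from the origin. -/
structure IsRadialWeight (p : ℝ → ℝ) : Prop where
  continuous : Continuous p
  pos : ∀ r, 0 < r → 0 < p r
  monotoneOn : MonotoneOn p (Ici 0)

lemma weightedPrimitive_zero (p h : ℝ → ℝ) : weightedPrimitive p h 0 = 0 := by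
  simp [weightedPrimitive]

lemma weightedPrimitive_sub {p h k : ℝ → ℝ} (hp : Continuous p) (hh : Continuous h)
    (hk : Continuous k) (r : ℝ) :
    weightedPrimitive p h r - weightedPrimitive p k r =
      weightedPrimitive p (fun t => h t - k t) r := by
  unfold weightedPrimitive
  rw [← sub_div, ← intervalIntegral.integral_sub]
  · simp only [mul_sub]
  · exact (hp.mul hh).intervalIntegrable _ _
  · exact (hp.mul hk).intervalIntegrable _ _

lemma weightedPrimitive_neg (p h : ℝ → ℝ) (r : ℝ) :
    weightedPrimitive p (fun t => -h t) r = -weightedPrimitive p h r := by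
  simp [weightedPrimitive, neg_div]

namespace IsRadialWeight

variable {p h k : ℝ → ℝ}

lemma nonneg (hp : IsRadialWeight p) {r : ℝ} (hr : 0 ≤ r) : 0 ≤ p r := by
  rcases hr.eq_or_lt with rfl | hr
  · exact ge_of_tendsto (hp.continuous.continuousWithinAt (s := Ioi 0))
      (eventually_nhdsWithin_of_forall fun t ht => (hp.pos t ht).le)
  · exact (hp.pos r hr).le

lemma le_integral (hp : IsRadialWeight p) (hh : Continuous h) (hk : Continuous k) {r : ℝ}
    (hr : 0 ≤ r) (hk0 : ∀ t ∈ Icc 0 r, 0 ≤ k t) (hle : ∀ t ∈ Icc 0 r, h t ≤ k t) :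
    weightedPrimitive p h r ≤ ∫ t in (0:ℝ)..r, k t := by
  rcases hr.eq_or_lt with rfl | hr'
  · simp [weightedPrimitive]
  rw [weightedPrimitive, div_le_iff₀ (hp.pos r hr'), ← intervalIntegral.integral_mul_const]
  refine intervalIntegral.integral_mono_on hr ((hp.continuous.mul hh).intervalIntegrable _ _)
    ((hk.mul continuous_const).intervalIntegrable _ _) fun t ht => ?_
  calc p t * h t ≤ p t * k t := mul_le_mul_of_nonneg_left (hle t ht) (hp.nonneg ht.1)
    _ ≤ p r * k t := mul_le_mul_of_nonneg_right (hp.monotoneOn ht.1 hr ht.2) (hk0 t ht)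
    _ = k t * p r := mul_comm _ _

lemma abs_le_integral (hp : IsRadialWeight p) (hh : Continuous h) (hk : Continuous k) {r : ℝ}
    (hr : 0 ≤ r) (hle : ∀ t ∈ Icc 0 r, |h t| ≤ k t) :
    |weightedPrimitive p h r| ≤ ∫ t in (0:ℝ)..r, k t := by
  have hk0 : ∀ t ∈ Icc 0 r, 0 ≤ k t := fun t ht => (abs_nonneg _).trans (hle t ht)
  rw [abs_le']
  refine ⟨hp.le_integral hh hk hr hk0 fun t ht => (le_abs_self _).trans (hle t ht), ?_⟩
  rw [← weightedPrimitive_neg]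
  exact hp.le_integral hh.neg hk hr hk0 fun t ht => (neg_le_abs _).trans (hle t ht)

lemma le_mul (hp : IsRadialWeight p) (hh : Continuous h) {r c : ℝ}
    (hr : 0 ≤ r) (hc : 0 ≤ c) (hle : ∀ t ∈ Icc 0 r, h t ≤ c) :
    weightedPrimitive p h r ≤ r * c := by
  simpa using hp.le_integral hh (continuous_const (y := c)) hr (fun _ _ => hc) hle

lemma abs_le_mul (hp : IsRadialWeight p) (hh : Continuous h) {r c : ℝ}
    (hr : 0 ≤ r) (hle : ∀ t ∈ Icc 0 r, |h t| ≤ c) :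
    |weightedPrimitive p h r| ≤ r * c := by
  simpa using hp.abs_le_integral hh (continuous_const (y := c)) hr hle

lemma weightedPrimitive_nonneg (hp : IsRadialWeight p) {r : ℝ} (hr : 0 ≤ r)
    (h0 : ∀ t ∈ Icc 0 r, 0 ≤ h t) : 0 ≤ weightedPrimitive p h r :=
  div_nonneg (intervalIntegral.integral_nonneg hr fun t ht =>
    mul_nonneg (hp.nonneg ht.1) (h0 t ht)) (hp.nonneg hr)

lemma continuousOn (hp : IsRadialWeight p) (hh : Continuous h) :
    ContinuousOn (weightedPrimitive p h) (Ici 0) := by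
  intro r hr
  rcases (show (0:ℝ) ≤ r from hr).eq_or_lt with rfl | hr'
  · obtain ⟨c, hc⟩ := (isCompact_Icc (a := (0:ℝ)) (b := 1)).exists_bound_of_continuousOn
      hh.continuousOn
    rw [ContinuousWithinAt, weightedPrimitive_zero]
    have hlim : Tendsto (fun r : ℝ => r * c) (nhdsWithin 0 (Ici 0)) (nhds 0) := by
      have : Continuous fun r : ℝ => r * c := by fun_prop
      simpa using this.continuousWithinAt (s := Ici 0) (x := 0) |>.tendsto
    refine squeeze_zero_norm' ?_ hlim
    have h1 : Iio (1:ℝ) ∈ nhdsWithin (0:ℝ) (Ici 0) :=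
      mem_nhdsWithin_of_mem_nhds (Iio_mem_nhds one_pos)
    filter_upwards [self_mem_nhdsWithin, h1] with t ht ht1
    exact hp.abs_le_mul hh ht fun τ hτ => hc τ ⟨hτ.1, hτ.2.trans (le_of_lt ht1)⟩
  · have hi : Continuous fun r => ∫ t in (0:ℝ)..r, p t * h t :=
      intervalIntegral.continuous_primitive
        (fun _ _ => (hp.continuous.mul hh).intervalIntegrable _ _) 0
    exact (hi.continuousAt.div hp.continuous.continuousAt
      (hp.pos r hr').ne').continuousWithinAt

lemma hasDerivAt (hp : IsRadialWeight p) (hh : Continuous h) {r p' : ℝ} (hr : 0 < r)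
    (hp' : HasDerivAt p p' r) :
    HasDerivAt (weightedPrimitive p h) (h r - p' / p r * weightedPrimitive p h r) r := by
  have hi : HasDerivAt (fun r => ∫ t in (0:ℝ)..r, p t * h t) (p r * h r) r :=
    (hp.continuous.mul hh).integral_hasStrictDerivAt 0 r |>.hasDerivAt
  have hne := (hp.pos r hr).ne'
  refine (hi.div hp' hne).congr_deriv ?_
  unfold weightedPrimitive
  field_simp

end IsRadialWeight

/-- Global solvability on `[0, 1]` of the singular initial value problem
`(p u')' = p F(r, u)`, `u(0) = s`, `u'(0) = 0`, with Lipschitz dependence on `s`. -/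
theorem exists_lipschitz_flow {p : ℝ → ℝ} (hp : IsRadialWeight p) {F : ℝ → ℝ → ℝ}
    (hF : Continuous (Function.uncurry F)) {K : ℝ} (hK : 1 ≤ K)
    (hlip : ∀ t x y, |F t x - F t y| ≤ K * |x - y|) (hF0 : ∀ t, F t 0 = 0) :
    ∃ u : ℝ → ℝ → ℝ, (∀ s, Continuous (u s)) ∧
      (∀ s, ∀ r ∈ Icc (0:ℝ) 1,
        u s r = s + ∫ t in (0:ℝ)..r, weightedPrimitive p (fun τ => F τ (u s τ)) t) ∧
      (∀ r, u 0 r = 0) ∧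
      ∃ L : ℝ, 0 < L ∧ ∀ s s', ∀ r ∈ Icc (0:ℝ) 1, |u s r - u s' r| ≤ L * |s - s'| := by
  have hK0 : 0 < K := by linarith
  set c : ℝ := 2 * K with hc
  have hc0 : 0 < c := by positivity
  let E : C(Icc (0:ℝ) 1, ℝ) → ℝ → ℝ := fun v t => Real.exp (c * t) * IccExtend zero_le_one v t
  have hE : ∀ v, Continuous (E v) := fun v => by
    have : Continuous (IccExtend (zero_le_one (α := ℝ)) v) := v.continuous.Icc_extend'
    fun_prop
  have hEF : ∀ v, Continuous fun t => F t (E v t) := fun v =>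
    hF.comp (continuous_id.prodMk (hE v))
  have hW : ∀ v, Continuous fun t =>
      weightedPrimitive p (fun τ => F τ (E v τ)) (max t 0) := fun v =>
    (hp.continuousOn (hEF v)).comp_continuous (by fun_prop) fun t => le_max_right t 0
  have hI : ∀ v, Continuous fun r => ∫ t in (0:ℝ)..r,
      weightedPrimitive p (fun τ => F τ (E v τ)) (max t 0) := fun v =>
    intervalIntegral.continuous_primitive (fun _ _ => (hW v).intervalIntegrable _ _) 0
  let Ψ : ℝ → C(Icc (0:ℝ) 1, ℝ) → C(Icc (0:ℝ) 1, ℝ) := fun s v =>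
    ⟨fun r => Real.exp (-(c * r)) * (s + ∫ t in (0:ℝ)..r,
      weightedPrimitive p (fun τ => F τ (E v τ)) (max t 0)), by
        have := (hI v).comp (continuous_subtype_val (p := (· ∈ Icc (0:ℝ) 1)))
        simp only [Function.comp_def] at this
        fun_prop⟩
  have hintexp : ∀ r : ℝ, ∫ t in (0:ℝ)..r, Real.exp (c * t) = (Real.exp (c * r) - 1) / c := by
    intro r
    rw [intervalIntegral.integral_comp_mul_left (fun x => Real.exp x) hc0.ne']
    simp [integral_exp, div_eq_inv_mul]
  have hΨ : ∀ s v w, dist (Ψ s v) (Ψ s w) ≤ 1 / 4 * dist v w := by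
    intro s v w
    rw [ContinuousMap.dist_le (by positivity)]
    rintro ⟨r, hr⟩
    set D := dist v w
    have hD : 0 ≤ D := dist_nonneg
    have hvw : ∀ τ, |F τ (E v τ) - F τ (E w τ)| ≤ K * D * Real.exp (c * τ) := by
      intro τ
      refine (hlip _ _ _).trans ?_
      rw [mul_assoc]
      refine mul_le_mul_of_nonneg_left ?_ hK0.le
      simp only [E]
      rw [← mul_sub, abs_mul, abs_of_pos (Real.exp_pos _), mul_comm]
      exact mul_le_mul_of_nonneg_right (ContinuousMap.dist_apply_le_dist (f := v) (g := w)
        (projIcc 0 1 zero_le_one τ)) (Real.exp_pos _).le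
    have hWW : ∀ t, 0 ≤ t → |weightedPrimitive p (fun τ => F τ (E v τ)) t -
        weightedPrimitive p (fun τ => F τ (E w τ)) t| ≤ K * D / c * Real.exp (c * t) := by
      intro t ht
      rw [weightedPrimitive_sub hp.continuous (hEF v) (hEF w)]
      refine (hp.abs_le_integral ((hEF v).sub (hEF w))
        (k := fun τ => K * D * Real.exp (c * τ)) (by fun_prop) ht fun τ _ => hvw τ).trans ?_
      rw [intervalIntegral.integral_const_mul, hintexp, mul_div_assoc', div_mul_eq_mul_div]
      gcongr
      linarith
    have hdiff : |(∫ t in (0:ℝ)..r, weightedPrimitive p (fun τ => F τ (E v τ)) (max t 0)) -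
        ∫ t in (0:ℝ)..r, weightedPrimitive p (fun τ => F τ (E w τ)) (max t 0)| ≤
        K * D / c * ((Real.exp (c * r) - 1) / c) := by
      rw [← intervalIntegral.integral_sub ((hW v).intervalIntegrable _ _)
        ((hW w).intervalIntegrable _ _), ← hintexp, ← intervalIntegral.integral_const_mul]
      have hci : Continuous fun t => K * D / c * Real.exp (c * t) := by fun_prop
      rw [← Real.norm_eq_abs]
      refine intervalIntegral.norm_integral_le_of_norm_le hr.1 ?_ (hci.intervalIntegrable _ _)
      refine MeasureTheory.ae_of_all _ fun t ht => ?_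
      rw [max_eq_left ht.1.le]
      exact hWW t ht.1.le
    simp only [Ψ, ContinuousMap.coe_mk, Real.dist_eq]
    rw [← mul_sub, add_sub_add_left_eq_sub, abs_mul, abs_of_pos (Real.exp_pos _)]
    calc Real.exp (-(c * r)) * _
        ≤ Real.exp (-(c * r)) * (K * D / c * (Real.exp (c * r) / c)) := by
          gcongr
          refine hdiff.trans ?_
          gcongr
          linarith
      _ = K / c ^ 2 * D := by
          rw [Real.exp_neg]
          field_simp
      _ ≤ 1 / 4 * D := by
          refine mul_le_mul_of_nonneg_right ?_ hD
          rw [hc, div_le_iff₀ (by positivity)]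
          nlinarith
  have hcon : ∀ s, ContractingWith (1 / 4) (Ψ s) := fun s =>
    ⟨by rw [← NNReal.coe_lt_coe]; norm_num, LipschitzWith.of_dist_le_mul fun v w => by
      simpa using hΨ s v w⟩
  let v : ℝ → C(Icc (0:ℝ) 1, ℝ) := fun s => (hcon s).fixedPoint (Ψ s)
  have hv : ∀ s, Ψ s (v s) = v s := fun s => (hcon s).fixedPoint_isFixedPt
  have hEv : ∀ w, ∀ r (hr : r ∈ Icc (0:ℝ) 1), E w r = Real.exp (c * r) * w ⟨r, hr⟩ := by
    intro w r hr
    simp only [E]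
    rw [IccExtend_of_mem _ _ hr]
  refine ⟨fun s => E (v s), fun s => hE _, ?_, ?_, Real.exp c * 2, by positivity, ?_⟩
  · intro s r hr
    have h1 : v s ⟨r, hr⟩ = Ψ s (v s) ⟨r, hr⟩ := by rw [hv]
    change E (v s) r = s + ∫ t in (0:ℝ)..r, weightedPrimitive p (fun τ => F τ (E (v s) τ)) t
    rw [hEv _ r hr, h1]
    simp only [Ψ, ContinuousMap.coe_mk]
    rw [← mul_assoc, ← Real.exp_add, add_neg_cancel, Real.exp_zero, one_mul]
    congr 1
    refine intervalIntegral.integral_congr fun t ht => ?_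
    rw [uIcc_of_le hr.1] at ht
    simp only [max_eq_left ht.1]
  · intro r
    have hE0 : ∀ t, E 0 t = 0 := fun t => by simp [E, IccExtend]
    have h0 : Ψ 0 0 = 0 := by
      ext r
      simp [Ψ, hE0, hF0, weightedPrimitive]
    have hv0 : v 0 = 0 := ((hcon 0).fixedPoint_unique h0).symm
    change E (v 0) r = 0
    rw [hv0, hE0]
  · intro s s' r hr
    have hd : dist (v s) (v s') ≤ 2 * |s - s'| := by
      have h1 : dist (v s) (v s') ≤ |s - s'| / (1 - ((1 / 4 : NNReal) : ℝ)) := by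
        refine (hcon s).dist_fixedPoint_fixedPoint_of_dist_le' (Ψ s')
          (hv s) (hv s') fun z => ?_
        rw [ContinuousMap.dist_le (abs_nonneg _)]
        rintro ⟨t, ht⟩
        simp only [Ψ, ContinuousMap.coe_mk, Real.dist_eq]
        rw [← mul_sub, add_sub_add_right_eq_sub, abs_mul, abs_of_pos (Real.exp_pos _)]
        refine mul_le_of_le_one_left (abs_nonneg _) (Real.exp_le_one_iff.2 ?_)
        have := mul_nonneg hc0.le ht.1
        linarith
      refine h1.trans ?_
      rw [div_le_iff₀ (by norm_num)]
      have := abs_nonneg (s - s')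
      norm_num
      nlinarith
    change |E (v s) r - E (v s') r| ≤ _
    rw [hEv _ r hr, hEv _ r hr, ← mul_sub, abs_mul, abs_of_pos (Real.exp_pos _),
      mul_assoc (Real.exp c)]
    refine mul_le_mul (Real.exp_le_exp.2 (mul_le_of_le_one_right hc0.le hr.2))
      ((ContinuousMap.dist_apply_le_dist _).trans hd) (abs_nonneg _) (Real.exp_pos _).le

lemma hasDerivWithinAt_Icc_of_eq_add_integral {u w : ℝ → ℝ} {s : ℝ} (hw : ContinuousOn w (Ici 0))
    (hu : ∀ r ∈ Icc (0:ℝ) 1, u r = s + ∫ t in (0:ℝ)..r, w t) {r : ℝ} (hr : r ∈ Icc (0:ℝ) 1) :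
    HasDerivWithinAt u (w r) (Icc 0 1) r := by
  have hc : Continuous fun t => w (max t 0) :=
    hw.comp_continuous (by fun_prop) fun t => le_max_right t 0
  have hd : HasDerivAt (fun r => s + ∫ t in (0:ℝ)..r, w (max t 0)) (w (max r 0)) r :=
    (hc.integral_hasStrictDerivAt 0 r).hasDerivAt.const_add s
  rw [max_eq_left hr.1] at hd
  have heq : ∀ y ∈ Icc (0:ℝ) 1, u y = s + ∫ t in (0:ℝ)..y, w (max t 0) := by
    intro y hy
    rw [hu y hy]
    congr 1
    refine intervalIntegral.integral_congr fun t ht => ?_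
    rw [uIcc_of_le hy.1] at ht
    simp only [max_eq_left ht.1]
  exact hd.hasDerivWithinAt.congr heq (heq r hr)

lemma monotoneOn_Icc_of_derivWithin_nonneg {z w : ℝ → ℝ}
    (hz : ∀ r ∈ Icc (0:ℝ) 1, HasDerivWithinAt z (w r) (Icc 0 1) r)
    (hw : ∀ r ∈ Icc (0:ℝ) 1, 0 ≤ w r) : MonotoneOn z (Icc 0 1) :=
  monotoneOn_of_hasDerivWithinAt_nonneg (convex_Icc _ _)
    (fun r hr => (hz r hr).continuousWithinAt)
    (fun r hr => (hz r (interior_subset hr)).mono interior_subset)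
    (fun r hr => hw r (interior_subset hr))

namespace IsRadialWeight

variable {p h : ℝ → ℝ}

lemma weightedPrimitive_pos (hp : IsRadialWeight p) (hh : Continuous h) {r : ℝ} (hr : 0 < r)
    (h0 : ∀ t ∈ Icc 0 r, 0 ≤ h t) {c : ℝ} (hc : c ∈ Ioc 0 r) (hhc : 0 < h c) :
    0 < weightedPrimitive p h r :=
  div_pos (intervalIntegral.integral_pos hr (hp.continuous.mul hh).continuousOn
    (fun t ht => mul_nonneg (hp.nonneg ht.1.le) (h0 t ⟨ht.1.le, ht.2⟩))
    ⟨c, ⟨hc.1.le, hc.2⟩, mul_pos (hp.pos c hc.1) hhc⟩) (hp.pos r hr)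

/-- A Gronwall estimate for nondecreasing solutions of `(p z')' ≤ p z`. -/
lemma le_mul_exp (hp : IsRadialWeight p) (hh : Continuous h) {z : ℝ → ℝ}
    (hz : ∀ r ∈ Icc (0:ℝ) 1, HasDerivWithinAt z (weightedPrimitive p h r) (Icc 0 1) r)
    (hw : ∀ r ∈ Icc (0:ℝ) 1, 0 ≤ weightedPrimitive p h r) (hz0 : 0 ≤ z 0)
    (hhz : ∀ r ∈ Icc (0:ℝ) 1, h r ≤ z r) {r : ℝ} (hr : r ∈ Icc (0:ℝ) 1) :
    z r ≤ z 0 * Real.exp r := by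
  have hmono := monotoneOn_Icc_of_derivWithin_nonneg hz hw
  have hzero : (0:ℝ) ∈ Icc (0:ℝ) 1 := by simp
  have hle : ∀ t ∈ Icc (0:ℝ) 1, weightedPrimitive p h t ≤ z t := by
    intro t ht
    have hzt : 0 ≤ z t := hz0.trans (hmono hzero ht ht.1)
    refine (hp.le_mul hh ht.1 hzt fun τ hτ => ?_).trans (mul_le_of_le_one_left hzt ht.2)
    have hτ1 : τ ∈ Icc (0:ℝ) 1 := ⟨hτ.1, hτ.2.trans ht.2⟩
    exact (hhz τ hτ1).trans (hmono hτ1 ht hτ.2)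
  have hd : ∀ t ∈ Icc (0:ℝ) 1, HasDerivWithinAt (fun t => z t * Real.exp (-t))
      ((weightedPrimitive p h t - z t) * Real.exp (-t)) (Icc 0 1) t := by
    intro t ht
    have he : HasDerivAt (fun t => Real.exp (-t)) (-Real.exp (-t)) t := by
      simpa using (hasDerivAt_neg t).exp
    exact ((hz t ht).mul he.hasDerivWithinAt).congr_deriv (by ring)
  have hanti : AntitoneOn (fun t => z t * Real.exp (-t)) (Icc 0 1) :=
    antitoneOn_of_hasDerivWithinAt_nonpos (convex_Icc _ _)
      (fun t ht => (hd t ht).continuousWithinAt)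
      (fun t ht => (hd t (interior_subset ht)).mono interior_subset)
      (fun t ht => mul_nonpos_of_nonpos_of_nonneg
        (sub_nonpos.2 (hle t (interior_subset ht))) (Real.exp_pos _).le)
  have := hanti hzero hr hr.1
  simp only [neg_zero, Real.exp_zero, mul_one, Real.exp_neg] at this
  rwa [← div_eq_mul_inv, div_le_iff₀ (Real.exp_pos r)] at this

/-- A Hopf-type lemma: the derivative of a nondecreasing solution that starts out strictly
increasing cannot vanish inside the interval. -/
lemma weightedPrimitive_pos_of_nonneg (hp : IsRadialWeight p) (hh : Continuous h) {u : ℝ → ℝ}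
    (hu : ∀ r ∈ Icc (0:ℝ) 1, HasDerivWithinAt u (weightedPrimitive p h r) (Icc 0 1) r)
    (hw : ∀ r ∈ Icc (0:ℝ) 1, 0 ≤ weightedPrimitive p h r)
    (hhu : ∀ t t', 0 ≤ t → t ≤ t' → t' ≤ 1 → h t' - h t ≤ u t' - u t)
    (h0 : 0 < h 0) {r : ℝ} (hr : r ∈ Ioo (0:ℝ) 1) : 0 < weightedPrimitive p h r := by
  by_contra hneg
  have hWr : weightedPrimitive p h r = 0 :=
    le_antisymm (not_lt.1 hneg) (hw r ⟨hr.1.le, hr.2.le⟩)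
  set P : ℝ → ℝ := fun r => ∫ t in (0:ℝ)..r, p t * h t
  have hP : ∀ t, HasDerivAt P (p t * h t) t := fun t =>
    ((hp.continuous.mul hh).integral_hasStrictDerivAt 0 t).hasDerivAt
  have hPW : ∀ t, 0 < t → P t = weightedPrimitive p h t * p t := fun t ht => by
    rw [weightedPrimitive, div_mul_cancel₀ _ (hp.pos t ht).ne']
  have hP0 : P 0 = 0 := by simp [P]
  have hPnn : ∀ t ∈ Icc (0:ℝ) 1, 0 ≤ P t := by
    intro t ht
    rcases ht.1.eq_or_lt with rfl | ht'
    · exact hP0.ge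
    · rw [hPW t ht']
      exact mul_nonneg (hw t ht) (hp.nonneg ht.1)
  have hPr : P r = 0 := by rw [hPW r hr.1, hWr, zero_mul]
  have hhr : h r = 0 := by
    have hmin : IsLocalMin P r := by
      filter_upwards [Ioo_mem_nhds hr.1 hr.2] with t ht
      rw [hPr]
      exact hPnn t ⟨ht.1.le, ht.2.le⟩
    exact (mul_eq_zero.1 (hmin.hasDerivAt_eq_zero (hP r))).resolve_left (hp.pos r hr.1).ne'
  obtain ⟨m, hm, hmax⟩ := isCompact_Icc.exists_isMaxOn (nonempty_Icc.2 hr.1.le)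
    (fun t _ => (hP t).continuousAt.continuousWithinAt : ContinuousOn P (Icc 0 r))
  have hM0 : 0 ≤ P m := hPnn m ⟨hm.1, hm.2.trans hr.2.le⟩
  have hstep : ∀ t ∈ Ioo m r, -(p t * h t) ≤ P m * r := by
    intro t ht
    have ht0 : 0 < t := hm.1.trans_lt ht.1
    have hsub : Icc t r ⊆ Icc (0:ℝ) 1 := Icc_subset_Icc ht0.le hr.2.le
    have hpt := hp.pos t ht0
    have hmvt : u r - u t ≤ P m / p t * (r - t) := by
      have hd : ∀ x ∈ Ioo t r, HasDerivAt u (weightedPrimitive p h x) x := fun x hx =>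
        (hu x (hsub ⟨hx.1.le, hx.2.le⟩)).hasDerivAt
          (Icc_mem_nhds (ht0.trans hx.1) (hx.2.trans hr.2))
      refine (convex_Icc t r).image_sub_le_mul_sub_of_deriv_le (f := u)
        (fun x hx => ((hu x (hsub hx)).mono hsub).continuousWithinAt) ?_ ?_
        t (left_mem_Icc.2 ht.2.le) r (right_mem_Icc.2 ht.2.le) ht.2.le
      · rw [interior_Icc]
        exact fun x hx => (hd x hx).differentiableAt.differentiableWithinAt
      · rw [interior_Icc]
        intro x hx
        have hx0 : 0 < x := ht0.trans hx.1
        rw [(hd x hx).deriv, weightedPrimitive]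
        exact div_le_div₀ hM0 (hmax ⟨hx0.le, hx.2.le⟩) hpt
          (hp.monotoneOn ht0.le hx0.le hx.1.le)
    have h1 := hhu t r ht0.le ht.2.le hr.2.le
    calc -(p t * h t) = p t * (h r - h t) := by rw [hhr]; ring
      _ ≤ p t * (P m / p t * (r - t)) := by gcongr; exact h1.trans hmvt
      _ = P m * (r - t) := by field_simp
      _ ≤ P m * r := by gcongr; linarith
  have hPm : P m ≤ (r - m) * (P m * r) := by
    have hint : ∀ x y, IntervalIntegrable (fun t => p t * h t) MeasureTheory.volume x y :=
      fun x y => (hp.continuous.mul hh).intervalIntegrable _ _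
    have h1 : P m = ∫ t in m..r, -(p t * h t) := by
      have := intervalIntegral.integral_interval_sub_left (hint 0 r) (hint 0 m)
      rw [intervalIntegral.integral_neg, ← this]
      change P m = -(P r - P m)
      rw [hPr]
      ring
    have h2 : ∫ t in m..r, -(p t * h t) ≤ ∫ _ in m..r, P m * r :=
      intervalIntegral.integral_mono_on_of_le_Ioo hm.2 (hint m r).neg
        intervalIntegrable_const hstep
    rw [h1] at h2 ⊢
    simpa [← h1, mul_left_comm] using h2
  have hPm0 : P m = 0 := by
    have hr0 := hr.1
    have h1 : (r - m) * (P m * r) ≤ 1 * (P m * r) := by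
      gcongr
      linarith [hm.1, hr.2]
    have h2 : P m * (1 - r) ≤ 0 := by linarith
    exact le_antisymm (nonpos_of_mul_nonpos_left h2 (sub_pos.2 hr.2)) hM0
  have hPzero : ∀ t ∈ Ioo 0 r, P t = 0 := fun t ht =>
    le_antisymm (hPm0 ▸ hmax ⟨ht.1.le, ht.2.le⟩) (hPnn t ⟨ht.1.le, (ht.2.trans hr.2).le⟩)
  have hhzero : ∀ t ∈ Ioo 0 r, h t = 0 := by
    intro t ht
    have hev : P =ᶠ[nhds t] fun _ => 0 := by
      filter_upwards [Ioo_mem_nhds ht.1 ht.2] with x hx using hPzero x hx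
    have := (hP t).unique ((hasDerivAt_const t (0:ℝ)).congr_of_eventuallyEq hev)
    exact (mul_eq_zero.1 this).resolve_left (hp.pos t ht.1).ne'
  have hlim : Tendsto h (nhdsWithin 0 (Ioi 0)) (nhds (h 0)) :=
    hh.continuousAt.continuousWithinAt
  have hlim0 : Tendsto h (nhdsWithin 0 (Ioi 0)) (nhds 0) :=
    tendsto_const_nhds.congr' (by
      filter_upwards [Ioo_mem_nhdsGT hr.1] with x hx using (hhzero x hx).symm)
  exact h0.ne' (tendsto_nhds_unique hlim hlim0)

end IsRadialWeight

/-- Shooting: for a suitable initial value below the first zero `σ` of `F(0, ·)`, the solution of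
`(p u')' = p F(r, u)` with `u'(0) = 0` is increasing on `[0, 1]` and satisfies `u'(1) = 0`. -/
theorem exists_monotone_neumann_solution {p : ℝ → ℝ} (hp : IsRadialWeight p) {F : ℝ → ℝ → ℝ}
    (hF : Continuous (Function.uncurry F)) {K : ℝ} (hK : 1 ≤ K)
    (hlip : ∀ t x y, |F t x - F t y| ≤ K * |x - y|) (hF0 : ∀ t, F t 0 = 0)
    (hmono : ∀ t t' x x', 0 ≤ t → t ≤ t' → t' ≤ 1 → x ≤ x' → F t' x' - F t x ≤ x' - x)
    {ε : ℝ} (hε : 0 < ε) (hFε : ∀ t ∈ Icc (0:ℝ) 1, ∀ x, x ≤ ε → 0 ≤ F t x)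
    {σ : ℝ} (hσ : 0 < σ) (hFσ0 : F 0 σ = 0) (hFσ1 : F 1 σ < 0)
    (hFpos : ∀ s, 0 < s → s < σ → 0 < F 0 s) :
    ∃ s, 0 < s ∧ s < σ ∧ ∃ u : ℝ → ℝ, Continuous u ∧ u 0 = s ∧
      (∀ r ∈ Icc (0:ℝ) 1,
        HasDerivWithinAt u (weightedPrimitive p (fun τ => F τ (u τ)) r) (Icc 0 1) r) ∧
      StrictMonoOn u (Icc 0 1) ∧
      weightedPrimitive p (fun τ => F τ (u τ)) 1 = 0 ∧
      ∀ r ∈ Icc (0:ℝ) 1, u r ≤ s * Real.exp r := by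
  obtain ⟨u, huc, hueq, hu0, L, hL, huL⟩ := exists_lipschitz_flow hp hF hK hlip hF0
  have hK0 : 0 < K := by linarith
  have hKL : 0 < K * L := mul_pos hK0 hL
  have hh : ∀ s, Continuous fun τ => F τ (u s τ) := fun s =>
    hF.comp (continuous_id.prodMk (huc s))
  set W : ℝ → ℝ → ℝ := fun s => weightedPrimitive p fun τ => F τ (u s τ) with hW
  have hzero : (0:ℝ) ∈ Icc (0:ℝ) 1 := by simp
  have hone : (1:ℝ) ∈ Icc (0:ℝ) 1 := by simp
  have hstart : ∀ s, u s 0 = s := fun s => by simpa using hueq s 0 hzero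
  have hWc : ∀ s, ContinuousOn (W s) (Ici 0) := fun s => hp.continuousOn (hh s)
  have hder : ∀ s, ∀ r ∈ Icc (0:ℝ) 1, HasDerivWithinAt (u s) (W s r) (Icc 0 1) r :=
    fun s r hr => hasDerivWithinAt_Icc_of_eq_add_integral (hWc s) (hueq s) hr
  have hFL : ∀ s s', ∀ r ∈ Icc (0:ℝ) 1,
      |F r (u s r) - F r (u s' r)| ≤ K * L * |s - s'| := fun s s' r hr => by
    refine (hlip _ _ _).trans ?_
    rw [mul_assoc]
    exact mul_le_mul_of_nonneg_left (huL s s' r hr) hK0.le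
  have hWL : ∀ s s', ∀ r ∈ Icc (0:ℝ) 1, |W s r - W s' r| ≤ K * L * |s - s'| := by
    intro s s' r hr
    simp only [hW]
    rw [weightedPrimitive_sub hp.continuous (hh s) (hh s')]
    refine (hp.abs_le_mul ((hh s).sub (hh s')) hr.1 fun t ht =>
      hFL s s' t ⟨ht.1, ht.2.trans hr.2⟩).trans ?_
    exact mul_le_of_le_one_left (mul_nonneg hKL.le (abs_nonneg _)) hr.2
  set A : Set ℝ := {s | 0 < s ∧ s ≤ σ ∧ ∃ r ∈ Icc (0:ℝ) 1, W s r < 0}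
  have hσA : σ ∈ A := by
    refine ⟨hσ, le_rfl, ?_⟩
    by_contra! hnn
    have hm := monotoneOn_Icc_of_derivWithin_nonneg (hder σ) hnn
    have hge : ∀ r ∈ Icc (0:ℝ) 1, σ ≤ u σ r := fun r hr => by
      simpa [hstart] using hm hzero hr hr.1
    have hz : ∀ r ∈ Icc (0:ℝ) 1, u σ r - σ ≤ 0 := fun r hr => by
      have := hp.le_mul_exp (hh σ) (z := fun r => u σ r - σ)
        (fun r hr => (hder σ r hr).sub_const σ) hnn (by simp [hstart]) (fun t ht => by
          have := hmono 0 t σ (u σ t) le_rfl ht.1 ht.2 (hge t ht)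
          rwa [hFσ0, sub_zero] at this) hr
      simpa [hstart] using this
    have hconst : ∀ r ∈ Icc (0:ℝ) 1, u σ r = σ := fun r hr =>
      le_antisymm (by linarith [hz r hr]) (hge r hr)
    have hpos : 0 < weightedPrimitive p (-fun τ => F τ (u σ τ)) 1 := by
      refine hp.weightedPrimitive_pos (hh σ).neg one_pos (fun t ht => ?_) (c := 1) (by simp) ?_
      · have := hmono 0 t σ σ le_rfl ht.1 ht.2 le_rfl
        simp only [Pi.neg_apply, hconst t ht]
        linarith
      · simp only [Pi.neg_apply, hconst 1 hone]
        linarith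
    have hpos' : 0 < -W σ 1 := by
      rw [← weightedPrimitive_neg]
      exact hpos
    linarith [hnn 1 hone]
  have hlow : ∀ s ∈ A, ε / L ≤ s := by
    rintro s ⟨hs0, -, r, hr, hneg⟩
    by_contra! hlt
    rw [lt_div_iff₀ hL] at hlt
    refine hneg.not_ge (hp.weightedPrimitive_nonneg hr.1 fun t ht => ?_)
    have ht1 : t ∈ Icc (0:ℝ) 1 := ⟨ht.1, ht.2.trans hr.2⟩
    refine hFε t ht1 _ ?_
    have := (le_abs_self _).trans (huL s 0 t ht1)
    rw [hu0, sub_zero, sub_zero, abs_of_pos hs0] at this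
    linarith
  have hbdd : BddBelow A := ⟨ε / L, hlow⟩
  set s := sInf A
  have hs0 : 0 < s := (div_pos hε hL).trans_le (le_csInf ⟨σ, hσA⟩ hlow)
  have hsσ' : s ≤ σ := csInf_le hbdd hσA
  have hnn : ∀ r ∈ Icc (0:ℝ) 1, 0 ≤ W s r := by
    intro r hr
    by_contra! hneg
    set δ := min (s / 2) (-W s r / (2 * (K * L)))
    have hδ0 : 0 < δ := lt_min (by linarith) (div_pos (by linarith) (by linarith))
    have hδs : δ ≤ s / 2 := min_le_left _ _
    have hδW : δ * (2 * (K * L)) ≤ -W s r := by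
      rw [← le_div_iff₀ (by linarith)]
      exact min_le_right _ _
    have hmem : s - δ ∈ A := by
      refine ⟨by linarith, by linarith, r, hr, ?_⟩
      have := (le_abs_self _).trans (hWL (s - δ) s r hr)
      rw [sub_sub_cancel_left, abs_neg, abs_of_pos hδ0] at this
      nlinarith
    have := csInf_le hbdd hmem
    linarith
  have hsσ : s < σ := by
    refine hsσ'.lt_of_ne fun h => ?_
    obtain ⟨-, -, r, hr, hneg⟩ := hσA
    rw [← h] at hneg
    exact hneg.not_ge (hnn r hr)
  have hm := monotoneOn_Icc_of_derivWithin_nonneg (hder s) hnn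
  have hge : ∀ r ∈ Icc (0:ℝ) 1, s ≤ u s r := fun r hr => by
    simpa [hstart] using hm hzero hr hr.1
  have h0pos : 0 < F 0 (u s 0) := by
    rw [hstart]
    exact hFpos s hs0 hsσ
  have hint : ∀ r ∈ Ioo (0:ℝ) 1, 0 < W s r := fun r hr =>
    hp.weightedPrimitive_pos_of_nonneg (hh s) (hder s) hnn
      (fun t t' ht htt' ht' => hmono t t' _ _ ht htt' ht'
        (hm ⟨ht, htt'.trans ht'⟩ ⟨ht.trans htt', ht'⟩ htt')) h0pos hr
  have hstrict : StrictMonoOn (u s) (Icc 0 1) :=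
    strictMonoOn_of_hasDerivWithinAt_pos (convex_Icc _ _)
      (fun r hr => (hder s r hr).continuousWithinAt)
      (fun r hr => (hder s r (interior_subset hr)).mono interior_subset)
      (fun r hr => hint r (by rwa [interior_Icc] at hr))
  have hend : W s 1 = 0 := by
    refine le_antisymm ?_ (hnn 1 hone)
    by_contra! hW1
    have hWpos : ∀ r ∈ Ioc (0:ℝ) 1, 0 < W s r := by
      intro r hr
      rcases hr.2.eq_or_lt with rfl | hr1
      · exact hW1
      · exact hint r ⟨hr.1, hr1⟩
    obtain ⟨δ, hδ0, hδ1, hδ⟩ : ∃ δ, 0 < δ ∧ δ ≤ 1 ∧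
        ∀ t ∈ Icc 0 δ, F 0 (u s 0) / 2 ≤ F t (u s t) := by
      have hev : ∀ᶠ t in nhds (0:ℝ), F 0 (u s 0) / 2 < F t (u s t) :=
        (hh s).continuousAt.eventually_const_lt (by linarith)
      obtain ⟨d, hd, hball⟩ := Metric.eventually_nhds_iff.1 hev
      refine ⟨min (d / 2) 1, lt_min (by linarith) one_pos, min_le_right _ _, fun t ht => ?_⟩
      refine (hball ?_).le
      rw [Real.dist_eq, sub_zero, abs_of_nonneg ht.1]
      exact (ht.2.trans (min_le_left _ _)).trans_lt (by linarith)
    obtain ⟨m, hm', hmin⟩ := isCompact_Icc.exists_isMinOn (nonempty_Icc.2 hδ1)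
      ((hWc s).mono fun t ht => hδ0.le.trans ht.1)
    have hWm : 0 < W s m := hWpos m ⟨hδ0.trans_le hm'.1, hm'.2⟩
    set η := min (F 0 (u s 0) / 2) (W s m) / (K * L)
    have hη0 : 0 < η := div_pos (lt_min (by linarith) hWm) hKL
    have hηeq : K * L * η = min (F 0 (u s 0) / 2) (W s m) := mul_div_cancel₀ _ hKL.ne'
    obtain ⟨s', ⟨hs'0, hs'σ, r, hr, hneg⟩, hs's⟩ :=
      exists_lt_of_csInf_lt ⟨σ, hσA⟩ (show sInf A < s + η by linarith)
    have hss' : s ≤ s' := csInf_le hbdd ⟨hs'0, hs'σ, r, hr, hneg⟩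
    have hdist : K * L * |s - s'| ≤ min (F 0 (u s 0) / 2) (W s m) := by
      rw [← hηeq, abs_sub_comm, abs_of_nonneg (sub_nonneg.2 hss')]
      exact mul_le_mul_of_nonneg_left (by linarith) hKL.le
    rcases le_total r δ with hrδ | hrδ
    · refine hneg.not_ge (hp.weightedPrimitive_nonneg hr.1 fun t ht => ?_)
      have h1 := hδ t ⟨ht.1, ht.2.trans hrδ⟩
      have h2 := (le_abs_self _).trans (hFL s s' t ⟨ht.1, ht.2.trans hr.2⟩)
      have h3 := hdist.trans (min_le_left _ _)
      linarith
    · have h1 : W s m ≤ W s r := hmin ⟨hrδ, hr.2⟩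
      have h2 := (le_abs_self _).trans (hWL s s' r hr)
      have h3 := hdist.trans (min_le_right _ _)
      linarith
  refine ⟨s, hs0, hsσ, u s, huc s, hstart s, hder s, hstrict, hend, fun r hr => ?_⟩
  have := hp.le_mul_exp (hh s) (hder s) hnn (by rw [hstart]; exact hs0.le) (fun t ht => by
    have := hmono 0 t 0 (u s t) le_rfl ht.1 ht.2 (hs0.le.trans (hge t ht))
    simpa [hF0] using this) hr
  rwa [hstart] at this

lemma isRadialWeight_pow_mul_exp (n : ℕ) {β : ℝ → ℝ} (hβ : Continuous β)
    (hβ0 : ∀ t, β t ≤ 0) :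
    IsRadialWeight fun r => r ^ n * Real.exp (-∫ t in (0:ℝ)..r, β t * t) := by
  have hβt : Continuous fun t => β t * t := by fun_prop
  have hi : ∀ x y, IntervalIntegrable (fun t => β t * t) MeasureTheory.volume x y :=
    fun x y => hβt.intervalIntegrable _ _
  refine ⟨?_, fun r hr => by positivity, fun r hr r' hr' hrr' => ?_⟩
  · have := intervalIntegral.continuous_primitive hi 0
    fun_prop
  · have hr0 : (0:ℝ) ≤ r := hr
    have hle : ∫ t in r..r', β t * t ≤ 0 := by
      rw [← neg_nonneg, ← intervalIntegral.integral_neg]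
      refine intervalIntegral.integral_nonneg hrr' fun t ht => neg_nonneg.2 ?_
      exact mul_nonpos_of_nonpos_of_nonneg (hβ0 t) (hr0.trans ht.1)
    have hadd := intervalIntegral.integral_add_adjacent_intervals (hi 0 r) (hi r r')
    exact mul_le_mul (pow_le_pow_left₀ hr0 hrr' n) (Real.exp_le_exp.2 (by linarith))
      (Real.exp_pos _).le (pow_nonneg (hr0.trans hrr') n)

lemma hasDerivAt_pow_mul_exp (n : ℕ) {β : ℝ → ℝ} (hβ : Continuous β) {r : ℝ} (hr : r ≠ 0) :
    HasDerivAt (fun r => r ^ n * Real.exp (-∫ t in (0:ℝ)..r, β t * t))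
      (r ^ n * Real.exp (-∫ t in (0:ℝ)..r, β t * t) * (n / r - β r * r)) r := by
  have hβt : Continuous fun t => β t * t := by fun_prop
  have hi : HasDerivAt (fun r => ∫ t in (0:ℝ)..r, β t * t) (β r * r) r :=
    (hβt.integral_hasStrictDerivAt 0 r).hasDerivAt
  refine ((hasDerivAt_pow n r).mul hi.neg.exp).congr_deriv ?_
  rcases n with _ | n
  · simp
  · simp only [Pi.neg_apply, Nat.add_sub_cancel]
    field_simp
    ring

lemma exists_first_zero {g : ℝ → ℝ} (hg : ContinuousOn g (Ici 0)) {ε S : ℝ} (hε : 0 < ε)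
    (hpos : ∀ s, 0 < s → s ≤ ε → 0 < g s) (hS : ε < S) (hgS : g S < 0) :
    ∃ σ, 0 < σ ∧ g σ = 0 ∧ ∀ s, 0 < s → s < σ → 0 < g s := by
  have hc : ∀ T, ContinuousOn g (Icc ε T) := fun T => hg.mono fun s hs => hε.le.trans hs.1
  have hne : (Icc ε S ∩ g ⁻¹' {0}).Nonempty := by
    obtain ⟨s, hs, hgs⟩ := intermediate_value_Icc' hS.le (hc S) ⟨hgS.le, (hpos ε hε le_rfl).le⟩
    exact ⟨s, hs, hgs⟩
  have hcomp : IsCompact (Icc ε S ∩ g ⁻¹' {0}) :=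
    isCompact_Icc.of_isClosed_subset
      ((hc S).preimage_isClosed_of_isClosed isClosed_Icc isClosed_singleton) inter_subset_left
  obtain ⟨σ, ⟨hσ, hgσ⟩, hleast⟩ := hcomp.exists_isLeast hne
  refine ⟨σ, hε.trans_le hσ.1, hgσ, fun s hs hsσ => ?_⟩
  rcases le_total s ε with h | h
  · exact hpos s hs h
  · by_contra! hneg
    obtain ⟨x, hx, hgx⟩ := intermediate_value_Icc' h (hc s) ⟨hneg, (hpos ε hε le_rfl).le⟩
    have := hleast ⟨⟨hx.1, hx.2.trans (hsσ.le.trans hσ.2)⟩, hgx⟩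
    linarith [hx.2]

lemma exists_mul_le_half_of_derivWithin_eq_zero {f : ℝ → ℝ} {c : ℝ} (hc : 0 < c)
    (hf : DifferentiableWithinAt ℝ f (Ici 0) 0) (hf0 : f 0 = 0)
    (hf'0 : derivWithin f (Ici 0) 0 = 0) :
    ∃ ε, 0 < ε ∧ ∀ x ∈ Icc 0 ε, c * f x ≤ x / 2 := by
  have hd := hf.hasDerivWithinAt
  rw [hf'0, hasDerivWithinAt_iff_isLittleO] at hd
  have hev := hd.bound (show 0 < 1 / (2 * c) by positivity)
  obtain ⟨d, hd, hball⟩ := Metric.eventually_nhds_iff.1 (eventually_nhdsWithin_iff.1 hev)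
  refine ⟨d / 2, by linarith, fun x hx => ?_⟩
  have h1 := hball (show dist x 0 < d by
    rw [Real.dist_eq, sub_zero, abs_of_nonneg hx.1]; linarith [hx.2]) hx.1
  simp only [hf0, sub_zero, smul_zero, Real.norm_eq_abs, abs_of_nonneg hx.1] at h1
  calc c * f x ≤ c * (1 / (2 * c) * x) := by gcongr; exact (le_abs_self _).trans h1
    _ = x / 2 := by field_simp

lemma exists_lipschitzOnWith_Icc {f : ℝ → ℝ} (hf : ContDiffOn ℝ 1 f (Ici 0)) (C : ℝ) :
    ∃ K, LipschitzOnWith K f (Icc 0 C) :=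
  LocallyLipschitzOn.exists_lipschitzOnWith_of_compact isCompact_Icc fun x hx =>
    (hf.mono Icc_subset_Ici_self x hx).exists_lipschitzOnWith (convex_Icc _ _)

/-- Clamping a real number to `[0, C]`. -/
def clampIcc (C x : ℝ) : ℝ := max 0 (min C x)

lemma continuous_clampIcc (C : ℝ) : Continuous (clampIcc C) := by
  unfold clampIcc
  fun_prop

lemma monotone_clampIcc (C : ℝ) : Monotone (clampIcc C) := fun _ _ h =>
  max_le_max le_rfl (min_le_min le_rfl h)

lemma clampIcc_mem {C : ℝ} (hC : 0 ≤ C) (x : ℝ) : clampIcc C x ∈ Icc 0 C :=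
  ⟨le_max_left _ _, max_le hC (min_le_left _ _)⟩

lemma clampIcc_of_mem {C x : ℝ} (hx : x ∈ Icc 0 C) : clampIcc C x = x := by
  rw [clampIcc, min_eq_right hx.2, max_eq_right hx.1]

lemma abs_clampIcc_sub_le (C x y : ℝ) : |clampIcc C x - clampIcc C y| ≤ |x - y| := by
  refine (abs_max_sub_max_le_max _ _ _ _).trans ?_
  simp only [sub_self, abs_zero]
  refine max_le (abs_nonneg _) ((abs_min_sub_min_le_max _ _ _ _).trans ?_)
  simp

/-- Existence of a nonconstant nondecreasing positive radial solution of the Neumann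
problem `-Δu + b(|x|) x·∇u + u = a(|x|) f(u)` in the unit ball, in radial coordinates. -/
theorem stmt_1 (N : ℕ) (hN : 2 ≤ N) (a b f : ℝ → ℝ)
    (ha_diff : ContDiffOn ℝ 1 a (Icc 0 1))
    (ha_mono : MonotoneOn a (Icc 0 1))
    (ha_nonconst : ∃ r ∈ Icc (0:ℝ) 1, ∃ s ∈ Icc (0:ℝ) 1, a r ≠ a s)
    (ha0 : 0 < a 0)
    (hb_cont : ContinuousOn b (Icc 0 1))
    (hb_nonpos : ∀ r ∈ Icc (0:ℝ) 1, b r ≤ 0)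
    (hrb_diff : ∀ r ∈ Ioo (0:ℝ) 1, DifferentiableAt ℝ (fun t => b t * t) r)
    (hrb : ∀ r ∈ Ioo (0:ℝ) 1,
      -1 - ((N : ℝ) - 1) / r ^ 2 < deriv (fun t => b t * t) r)
    (hf_diff : ContDiffOn ℝ 1 f (Ici 0))
    (hf_mono : MonotoneOn f (Ici 0))
    (hf0 : f 0 = 0)
    (hf'0 : derivWithin f (Ici 0) 0 = 0)
    (hf_liminf : ((1 / a 0 : ℝ) : EReal) <
      Filter.liminf (fun s : ℝ => ((f s / s : ℝ) : EReal)) Filter.atTop) :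
    ∃ u u' u'' : ℝ → ℝ,
      (∀ r ∈ Icc (0:ℝ) 1, HasDerivWithinAt u (u' r) (Icc 0 1) r) ∧
      ContinuousOn u' (Icc 0 1) ∧
      (∀ r ∈ Ioo (0:ℝ) 1, HasDerivAt u' (u'' r) r) ∧
      u' 0 = 0 ∧ u' 1 = 0 ∧
      (∀ r ∈ Icc (0:ℝ) 1, 0 < u r) ∧
      MonotoneOn u (Icc 0 1) ∧
      (∃ r ∈ Icc (0:ℝ) 1, ∃ s ∈ Icc (0:ℝ) 1, u r ≠ u s) ∧
      (∀ r ∈ Ioo (0:ℝ) 1,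
        -u'' r + (b r * r - ((N : ℝ) - 1) / r) * u' r + u r = a r * f (u r)) := by
  have h0 : (0:ℝ) ∈ Icc (0:ℝ) 1 := by simp
  have h1 : (1:ℝ) ∈ Icc (0:ℝ) 1 := by simp
  have ha01 : a 0 < a 1 := by
    refine (ha_mono h0 h1 zero_le_one).lt_of_ne fun heq => ?_
    obtain ⟨r, hr, s, hs, hne⟩ := ha_nonconst
    have hc : ∀ t ∈ Icc (0:ℝ) 1, a t = a 0 := fun t ht =>
      le_antisymm ((ha_mono ht h1 ht.2).trans heq.ge) (ha_mono h0 ht ht.1)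
    exact hne ((hc r hr).trans (hc s hs).symm)
  have ha1 : 0 < a 1 := ha0.trans ha01
  have hf_nonneg : ∀ x, 0 ≤ x → 0 ≤ f x := fun x hx =>
    hf0 ▸ hf_mono (mem_Ici.2 le_rfl) (mem_Ici.2 hx) hx
  obtain ⟨ε, hε, hfε⟩ := exists_mul_le_half_of_derivWithin_eq_zero ha1
    (hf_diff.differentiableOn one_ne_zero 0 (mem_Ici.2 le_rfl)) hf0 hf'0
  obtain ⟨S, hS, hfS⟩ : ∃ S, ε < S ∧ S - a 0 * f S < 0 := by
    obtain ⟨S, hS, hεS⟩ :=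
      ((eventually_lt_of_lt_liminf hf_liminf).and (eventually_gt_atTop ε)).exists
    refine ⟨S, hεS, ?_⟩
    rw [EReal.coe_lt_coe_iff, div_lt_div_iff₀ ha0 (hε.trans hεS)] at hS
    linarith
  obtain ⟨σ, hσ, hgσ, hgpos⟩ := exists_first_zero (g := fun s => s - a 0 * f s)
    (continuousOn_id.sub (continuousOn_const.mul hf_diff.continuousOn)) hε
    (fun s hs hsε => by
      have h2 := hfε s ⟨hs.le, hsε⟩
      have h3 := mul_le_mul_of_nonneg_right ha01.le (hf_nonneg s hs.le)
      linarith) hS hfS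
  have hfσ : 0 < f σ := by
    by_contra! h
    nlinarith
  set C : ℝ := 3 * σ
  have hC0 : 0 ≤ C := by positivity
  obtain ⟨Kf, hKf⟩ := exists_lipschitzOnWith_Icc hf_diff C
  have ht01 : ∀ t, clampIcc 1 t ∈ Icc (0:ℝ) 1 := clampIcc_mem zero_le_one
  have hx0C : ∀ x, clampIcc C x ∈ Icc 0 C := clampIcc_mem hC0
  have hA : Continuous fun t => a (clampIcc 1 t) :=
    ha_diff.continuousOn.comp_continuous (continuous_clampIcc 1) ht01
  have hB : Continuous fun t => b (clampIcc 1 t) :=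
    hb_cont.comp_continuous (continuous_clampIcc 1) ht01
  have hφ : Continuous fun x => f (clampIcc C x) :=
    hf_diff.continuousOn.comp_continuous (continuous_clampIcc C) fun x => (hx0C x).1
  have hApos : ∀ t, 0 ≤ a (clampIcc 1 t) := fun t =>
    ha0.le.trans (ha_mono h0 (ht01 t) (ht01 t).1)
  have hAle : ∀ t, a (clampIcc 1 t) ≤ a 1 := fun t => ha_mono (ht01 t) h1 (ht01 t).2
  set F : ℝ → ℝ → ℝ := fun t x => clampIcc C x - a (clampIcc 1 t) * f (clampIcc C x) with hFdef
  have hF : Continuous (Function.uncurry F) :=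
    ((continuous_clampIcc C).comp continuous_snd).sub
      ((hA.comp continuous_fst).mul (hφ.comp continuous_snd))
  have hlip : ∀ t x y, |F t x - F t y| ≤ (1 + a 1 * Kf) * |x - y| := by
    intro t x y
    have h2 := abs_clampIcc_sub_le C x y
    have h3 : |f (clampIcc C x) - f (clampIcc C y)| ≤ Kf * |x - y| :=
      (hKf.dist_le_mul _ (hx0C x) _ (hx0C y)).trans (by gcongr; exact h2)
    calc |F t x - F t y|
        = |(clampIcc C x - clampIcc C y) -
            a (clampIcc 1 t) * (f (clampIcc C x) - f (clampIcc C y))| := by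
          simp only [hFdef]
          ring_nf
      _ ≤ |clampIcc C x - clampIcc C y| +
            |a (clampIcc 1 t) * (f (clampIcc C x) - f (clampIcc C y))| := abs_sub _ _
      _ ≤ |x - y| + a 1 * (Kf * |x - y|) := by
          rw [abs_mul, abs_of_nonneg (hApos t)]
          gcongr
          exact hAle t
      _ = (1 + a 1 * Kf) * |x - y| := by ring
  have hC_0 : clampIcc C 0 = 0 := clampIcc_of_mem ⟨le_rfl, hC0⟩
  have hmono : ∀ t t' x x', 0 ≤ t → t ≤ t' → t' ≤ 1 → x ≤ x' → F t' x' - F t x ≤ x' - x := by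
    intro t t' x x' _ htt' _ hxx'
    have h2 : clampIcc C x' - clampIcc C x ≤ x' - x := by
      have := (le_abs_self _).trans (abs_clampIcc_sub_le C x' x)
      rwa [abs_of_nonneg (sub_nonneg.2 hxx')] at this
    have h3 : a (clampIcc 1 t) * f (clampIcc C x) ≤ a (clampIcc 1 t') * f (clampIcc C x') :=
      mul_le_mul (ha_mono (ht01 t) (ht01 t') (monotone_clampIcc 1 htt'))
        (hf_mono (hx0C x).1 (hx0C x').1 (monotone_clampIcc C hxx'))
        (hf_nonneg _ (hx0C x).1) (hApos t')
    simp only [hFdef]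
    linarith
  have hFε : ∀ t ∈ Icc (0:ℝ) 1, ∀ x, x ≤ ε → 0 ≤ F t x := by
    intro t _ x hx
    have hmem : clampIcc C x ∈ Icc 0 ε :=
      ⟨(hx0C x).1, max_le hε.le ((min_le_right _ _).trans hx)⟩
    have h2 := hfε _ hmem
    have h3 := mul_le_mul_of_nonneg_right (hAle t) (hf_nonneg _ hmem.1)
    simp only [hFdef]
    linarith [hmem.1]
  have hCσ : clampIcc C σ = σ := clampIcc_of_mem ⟨hσ.le, by linarith⟩
  have hp := isRadialWeight_pow_mul_exp (N - 1) hB fun t => hb_nonpos _ (ht01 t)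
  obtain ⟨s, hs, hsσ, u, hu, hus, hder, hstrict, hend, hexp⟩ :=
    exists_monotone_neumann_solution hp hF
      (by have := mul_nonneg ha1.le Kf.2; simpa using this) hlip
      (fun t => by simp [hFdef, hC_0, hf0]) hmono hε hFε hσ
      (by simpa only [hFdef, hCσ, clampIcc_of_mem h0] using hgσ)
      (by
        simp only [hFdef, hCσ, clampIcc_of_mem h1]
        nlinarith)
      (fun s hs hsσ => by
        simp only [hFdef, clampIcc_of_mem h0, clampIcc_of_mem (C := C) ⟨hs.le, by linarith⟩]
        exact hgpos s hs hsσ)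
  set p : ℝ → ℝ :=
    fun r => r ^ (N - 1) * Real.exp (-∫ t in (0:ℝ)..r, b (clampIcc 1 t) * t)
  set w := weightedPrimitive p fun τ => F τ (u τ)
  have hh : Continuous fun τ => F τ (u τ) := hF.comp (continuous_id.prodMk hu)
  have hupos : ∀ r ∈ Icc (0:ℝ) 1, 0 < u r := fun r hr =>
    (hus.symm ▸ hs : 0 < u 0).trans_le (hstrict.monotoneOn h0 hr hr.1)
  have huC : ∀ r ∈ Icc (0:ℝ) 1, u r ≤ C := fun r hr => by
    have h2 : Real.exp r ≤ 3 :=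
      (Real.exp_le_exp.2 hr.2).trans (by linarith [Real.exp_one_lt_d9])
    have h3 := mul_le_mul hsσ.le h2 (Real.exp_pos r).le hσ.le
    linarith [hexp r hr]
  refine ⟨u, w, fun r => F r (u r) - (((N : ℝ) - 1) / r - b r * r) * w r, hder,
    (hp.continuousOn hh).mono Icc_subset_Ici_self, ?_, weightedPrimitive_zero _ _, hend, hupos,
    hstrict.monotoneOn, ⟨0, h0, 1, h1, (hstrict h0 h1 one_pos).ne⟩, ?_⟩
  · intro r hr
    have hd := hp.hasDerivAt hh hr.1 (hasDerivAt_pow_mul_exp (N - 1) hB hr.1.ne')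
    refine hd.congr_deriv ?_
    rw [mul_div_cancel_left₀ _ (hp.pos r hr.1).ne', clampIcc_of_mem ⟨hr.1.le, hr.2.le⟩,
      Nat.cast_sub (by lia), Nat.cast_one]
  · intro r hr
    have hr' : r ∈ Icc (0:ℝ) 1 := ⟨hr.1.le, hr.2.le⟩
    simp only [hFdef, clampIcc_of_mem hr', clampIcc_of_mem ⟨(hupos r hr').le, huC r hr'⟩]
    ring
end

section
/- Let N ≥ 2. Let a : [0,1] → ℝ be continuously differentiable, nondecreasing, with a(0) > 0; let b : [0,1] → ℝ be continuous and nonpositive with (d/dr)(b(r)·r) > −1 − (N−1)/r² on (0,1); let f : [0,∞) → ℝ be continuously differentiable and nondecreasing with f(0) = 0, f'(0) = 0, and liminf_{s→+∞} f(s)/s > 1/a(0). Then for every λ̄ ≥ 0 there exist constants K_∞ > 0 and K₂ > 0 such that for every λ ∈ [0, λ̄] and every nonnegative nondecreasing function u : [0,1] → ℝ, continuously differentiable on [0,1] and twice differentiable on (0,1), with u'(0) = u'(1) = 0 and −u''(r) + (b(r)·r − (N−1)/r)·u'(r) + u(r) = a(r)·f(u(r)) + λ on (0,1), one has sup_{r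 ∈ [0,1]} u(r) ≤ K_∞ and ∫₀¹ (u'(r)² + u(r)²) r^{N−1} dr ≤ K₂². -/
open Set Filter

/-- `u` (with derivative `u'` and second derivative `u''`) is a nonnegative
nondecreasing radial solution of the Neumann problem
`-Δu + b(|x|) x·∇u + u = a(|x|) f(u) + lam` on the unit ball of `ℝ^N`,
written in radial coordinates. -/
def IsRadialSol (N : ℕ) (a b f : ℝ → ℝ) (lam : ℝ) (u u' u'' : ℝ → ℝ) : Prop :=
  (∀ r ∈ Set.Icc (0:ℝ) 1, 0 ≤ u r) ∧
  MonotoneOn u (Set.Icc 0 1) ∧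
  (∀ r ∈ Set.Icc (0:ℝ) 1, HasDerivWithinAt u (u' r) (Set.Icc 0 1) r) ∧
  ContinuousOn u' (Set.Icc 0 1) ∧
  (∀ r ∈ Set.Ioo (0:ℝ) 1, HasDerivAt u' (u'' r) r) ∧
  u' 0 = 0 ∧ u' 1 = 0 ∧
  ∀ r ∈ Set.Ioo (0:ℝ) 1,
    -u'' r + (b r * r - ((N : ℝ) - 1) / r) * u' r + u r = a r * f (u r) + lam

/-- If `f s / s` eventually stays above `1 / α`, then `α f` dominates an affine function of slope
larger than one on the half-line. -/
lemma exists_affine_le_of_lt_liminf {f : ℝ → ℝ} {α : ℝ} (hα : 0 < α)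
    (hf_nonneg : ∀ s, 0 ≤ s → 0 ≤ f s)
    (hf_liminf : ((1 / α : ℝ) : EReal) <
      Filter.liminf (fun s : ℝ => ((f s / s : ℝ) : EReal)) Filter.atTop) :
    ∃ δ > (0:ℝ), ∃ C > (0:ℝ), ∀ s, 0 ≤ s → (1 + δ) * s - C ≤ α * f s := by
  obtain ⟨q, hq₁, hq₂⟩ := EReal.lt_iff_exists_real_btwn.mp hf_liminf
  have hq : 1 / α < q := EReal.coe_lt_coe_iff.mp hq₁
  have hαq : 1 < q * α := (div_lt_iff₀ hα).mp hq
  obtain ⟨S, hS⟩ := eventually_atTop.mp (eventually_lt_of_lt_liminf hq₂)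
  have hT : 0 < max S 1 := lt_max_of_lt_right one_pos
  refine ⟨q * α - 1, by linarith, q * α * max S 1, by positivity, fun s hs => ?_⟩
  have hqα : 0 < q * α := by linarith
  rcases le_total (max S 1) s with h | h
  · have hs' : 0 < s := hT.trans_le h
    have h1 : q < f s / s := EReal.coe_lt_coe_iff.mp (hS s ((le_max_left _ _).trans h))
    have h2 : q * s < f s := (lt_div_iff₀ hs').mp h1
    have h3 : 0 < q * α * max S 1 := by positivity
    nlinarith [mul_lt_mul_of_pos_left h2 hα]
  · nlinarith [mul_le_mul_of_nonneg_left h hqα.le, mul_nonneg hα.le (hf_nonneg s hs)]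

/-- A function `v` on `[0, 1]` with `v' + (n + 1) / r * v ≤ A` satisfies `v r ≤ A * r / (n + 2)`,
here with the power `r ^ (n + 1)` not divided out. -/
lemma pow_mul_le_of_radial_deriv_le {n : ℕ} {v v' : ℝ → ℝ} {A : ℝ}
    (hv : ContinuousOn v (Icc 0 1)) (hv' : ∀ r ∈ Ioo (0:ℝ) 1, HasDerivAt v (v' r) r)
    (hle : ∀ r ∈ Ioo (0:ℝ) 1, v' r + (n + 1) / r * v r ≤ A) {r : ℝ} (hr : r ∈ Icc (0:ℝ) 1) :
    r ^ (n + 1) * v r ≤ A * r ^ (n + 2) / (n + 2) := by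
  have hd : ∀ t ∈ Ioo (0:ℝ) 1,
      HasDerivAt (fun t => t ^ (n + 1) * v t - A * t ^ (n + 2) / (n + 2))
        (t ^ (n + 1) * (v' t + (n + 1) / t * v t - A)) t := by
    intro t ht
    have ht0 : t ≠ 0 := ht.1.ne'
    have hn : (n : ℝ) + 2 ≠ 0 := by positivity
    refine (((hasDerivAt_pow (n + 1) t).mul (hv' t ht)).sub
      (((hasDerivAt_pow (n + 2) t).const_mul A).div_const ((n : ℝ) + 2))).congr_deriv ?_
    simp only [Nat.add_sub_cancel, show n + 2 - 1 = n + 1 from rfl]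
    push_cast
    field_simp
    ring
  have hanti : AntitoneOn (fun t => t ^ (n + 1) * v t - A * t ^ (n + 2) / (n + 2)) (Icc 0 1) := by
    refine antitoneOn_of_deriv_nonpos (convex_Icc 0 1) (by fun_prop) ?_ ?_
    · rw [interior_Icc]
      exact fun t ht => (hd t ht).differentiableAt.differentiableWithinAt
    · rw [interior_Icc]
      intro t ht
      rw [(hd t ht).deriv]
      exact mul_nonpos_of_nonneg_of_nonpos (pow_nonneg ht.1.le _) (by linarith [hle t ht])
  have h := hanti (left_mem_Icc.mpr zero_le_one) hr hr.1
  simp at h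
  exact h

/-- The derivative of a nondecreasing function on `[0, 1]` is nonnegative, endpoints included. -/
lemma nonneg_of_hasDerivWithinAt_of_monotoneOn_Icc {u u' : ℝ → ℝ}
    (hu : MonotoneOn u (Icc 0 1))
    (hu' : ∀ r ∈ Icc (0:ℝ) 1, HasDerivWithinAt u (u' r) (Icc 0 1) r)
    {r : ℝ} (hr : r ∈ Icc (0:ℝ) 1) : 0 ≤ u' r := by
  rw [← (hu' r hr).derivWithin (uniqueDiffOn_Icc zero_lt_one r hr)]
  exact hu.derivWithin_nonneg

/-- A radial solution of a problem whose nonlinearity satisfies `(1 + δ) s - C ≤ a(0) f(s)` is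
bounded by `C / δ + C`, and its derivative by `C`. -/
lemma IsRadialSol.bounds {n : ℕ} {a b f : ℝ → ℝ} {lam δ C : ℝ} {u u' u'' : ℝ → ℝ}
    (ha_mono : MonotoneOn a (Icc 0 1)) (hb_nonpos : ∀ r ∈ Icc (0:ℝ) 1, b r ≤ 0)
    (hf_nonneg : ∀ s, 0 ≤ s → 0 ≤ f s) (hδ : 0 < δ)
    (hf : ∀ s, 0 ≤ s → (1 + δ) * s - C ≤ a 0 * f s) (hlam : 0 ≤ lam)
    (h : IsRadialSol (n + 2) a b f lam u u' u'') :
    ∀ r ∈ Icc (0:ℝ) 1, u r ≤ C / δ + C ∧ u' r ≤ C := by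
  obtain ⟨hu0, hmono, hu', hcont, hu'', h0, h1, heq⟩ := h
  have hz : (0:ℝ) ∈ Icc (0:ℝ) 1 := left_mem_Icc.mpr zero_le_one
  have hu'0 : ∀ r ∈ Icc (0:ℝ) 1, 0 ≤ u' r := fun r hr =>
    nonneg_of_hasDerivWithinAt_of_monotoneOn_Icc hmono hu' hr
  have hle : ∀ r ∈ Ioo (0:ℝ) 1, u'' r + (n + 1) / r * u' r ≤ C - δ * u 0 := by
    intro r hr
    have hrI : r ∈ Icc (0:ℝ) 1 := Ioo_subset_Icc_self hr
    have e := heq r hr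
    push_cast at e
    have e1 : ((n : ℝ) + 2 - 1) / r = (n + 1) / r := by ring
    rw [e1] at e
    have hbr : b r * r * u' r ≤ 0 := mul_nonpos_of_nonpos_of_nonneg
      (mul_nonpos_of_nonpos_of_nonneg (hb_nonpos r hrI) hr.1.le) (hu'0 r hrI)
    have haf : a 0 * f (u r) ≤ a r * f (u r) :=
      mul_le_mul_of_nonneg_right (ha_mono hz hrI hr.1.le) (hf_nonneg _ (hu0 r hrI))
    have hδu : δ * u 0 ≤ δ * u r := mul_le_mul_of_nonneg_left (hmono hz hrI hr.1.le) hδ.le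
    linarith [hf (u r) (hu0 r hrI)]
  have hw := fun r (hr : r ∈ Icc (0:ℝ) 1) => pow_mul_le_of_radial_deriv_le hcont hu'' hle hr
  have hn : (1:ℝ) ≤ (n : ℝ) + 2 := by linarith [Nat.cast_nonneg (α := ℝ) n]
  have hA : 0 ≤ C - δ * u 0 := by
    have := hw 1 (right_mem_Icc.mpr zero_le_one)
    rw [h1, mul_zero, one_pow, mul_one, le_div_iff₀ (by linarith)] at this
    linarith
  have hC : C - δ * u 0 ≤ C := by linarith [mul_nonneg hδ.le (hu0 0 hz)]
  have hu'C : ∀ r ∈ Icc (0:ℝ) 1, u' r ≤ C := by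
    intro r hr
    rcases hr.1.eq_or_lt with rfl | hr0
    · rw [h0]; linarith
    · have hp : 0 < r ^ (n + 1) := pow_pos hr0 _
      refine le_of_mul_le_mul_left ?_ hp
      calc r ^ (n + 1) * u' r ≤ (C - δ * u 0) * r ^ (n + 2) / (n + 2) := hw r hr
        _ ≤ (C - δ * u 0) * r ^ (n + 2) := div_le_self (by positivity) hn
        _ ≤ C * r ^ (n + 1) := mul_le_mul hC (pow_le_pow_of_le_one hr0.le hr.2 (by omega))
            (by positivity) (hA.trans hC)
        _ = r ^ (n + 1) * C := mul_comm _ _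
  refine fun r hr => ⟨?_, hu'C r hr⟩
  have hu0C : u 0 ≤ C / δ := by
    rw [le_div_iff₀ hδ]
    linarith
  have hinc : u r - u 0 ≤ C * (r - 0) := by
    have := (convex_Icc (0:ℝ) 1).norm_image_sub_le_of_norm_hasDerivWithin_le hu'
      (fun x hx => by rw [Real.norm_of_nonneg (hu'0 x hx)]; exact hu'C x hx) hz hr
    rw [Real.norm_of_nonneg (sub_nonneg.mpr hr.1)] at this
    exact (le_abs_self _).trans this
  nlinarith [mul_le_mul_of_nonneg_left hr.2 (hA.trans hC)]

/-- Uniform a priori `L^∞` and `H¹` bounds for nonnegative nondecreasing radial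
solutions of the family of Neumann problems with parameter `λ ∈ [0, λ̄]`. -/
theorem stmt_8 (N : ℕ) (hN : 2 ≤ N) (a b f : ℝ → ℝ)
    (ha_diff : ContDiffOn ℝ 1 a (Icc 0 1))
    (ha_mono : MonotoneOn a (Icc 0 1))
    (ha0 : 0 < a 0)
    (hb_cont : ContinuousOn b (Icc 0 1))
    (hb_nonpos : ∀ r ∈ Icc (0:ℝ) 1, b r ≤ 0)
    (hrb_diff : ∀ r ∈ Ioo (0:ℝ) 1, DifferentiableAt ℝ (fun t => b t * t) r)
    (hrb : ∀ r ∈ Ioo (0:ℝ) 1,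
      -1 - ((N : ℝ) - 1) / r ^ 2 < deriv (fun t => b t * t) r)
    (hf_diff : ContDiffOn ℝ 1 f (Ici 0))
    (hf_mono : MonotoneOn f (Ici 0))
    (hf0 : f 0 = 0)
    (hf'0 : derivWithin f (Ici 0) 0 = 0)
    (hf_liminf : ((1 / a 0 : ℝ) : EReal) <
      Filter.liminf (fun s : ℝ => ((f s / s : ℝ) : EReal)) Filter.atTop) :
    ∀ lambar : ℝ, 0 ≤ lambar →
      ∃ Kinf > (0:ℝ), ∃ K₂ > (0:ℝ),
        ∀ lam ∈ Icc (0:ℝ) lambar, ∀ u u' u'' : ℝ → ℝ,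
          IsRadialSol N a b f lam u u' u'' →
            (∀ r ∈ Icc (0:ℝ) 1, u r ≤ Kinf) ∧
            ∫ r in (0:ℝ)..1, (u' r ^ 2 + u r ^ 2) * r ^ (N - 1) ≤ K₂ ^ 2 := by
  intro lambar _
  obtain ⟨n, rfl⟩ := Nat.exists_eq_add_of_le' hN
  have hf_nonneg : ∀ s, 0 ≤ s → 0 ≤ f s := fun s hs =>
    hf0 ▸ hf_mono self_mem_Ici hs hs
  obtain ⟨δ, hδ, C, hC, hf⟩ := exists_affine_le_of_lt_liminf ha0 hf_nonneg hf_liminf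
  have hK : 0 < C / δ + C := by positivity
  refine ⟨C / δ + C, hK, 2 * (C / δ + C), by positivity, ?_⟩
  intro lam hlam u u' u'' h
  have hbd := h.bounds ha_mono hb_nonpos hf_nonneg hδ hf hlam.1
  refine ⟨fun r hr => (hbd r hr).1, ?_⟩
  obtain ⟨hu0, hmono, hu', -⟩ := h
  have hint := intervalIntegral.norm_integral_le_of_norm_le_const (a := (0:ℝ)) (b := 1)
    (f := fun r => (u' r ^ 2 + u r ^ 2) * r ^ (n + 2 - 1)) (C := (2 * (C / δ + C)) ^ 2) ?_
  · rw [sub_zero, abs_one, mul_one] at hint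
    exact (le_abs_self _).trans hint
  · intro r hr
    rw [uIoc_of_le zero_le_one] at hr
    have hrI : r ∈ Icc (0:ℝ) 1 := Ioc_subset_Icc_self hr
    have hr0 : 0 ≤ r := hrI.1
    have hu'K : u' r ≤ C / δ + C := by
      have : 0 < C / δ := by positivity
      linarith [(hbd r hrI).2]
    have h1 : u' r ^ 2 ≤ (C / δ + C) ^ 2 :=
      pow_le_pow_left₀ (nonneg_of_hasDerivWithinAt_of_monotoneOn_Icc hmono hu' hrI) hu'K 2
    have h2 : u r ^ 2 ≤ (C / δ + C) ^ 2 := pow_le_pow_left₀ (hu0 r hrI) (hbd r hrI).1 2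
    rw [Real.norm_of_nonneg (by positivity)]
    calc (u' r ^ 2 + u r ^ 2) * r ^ (n + 2 - 1) ≤ u' r ^ 2 + u r ^ 2 :=
          mul_le_of_le_one_right (by positivity) (pow_le_one₀ hr0 hrI.2)
      _ ≤ (2 * (C / δ + C)) ^ 2 := by nlinarith
end
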